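/- arXiv:1206.0017 — 4 statements merged into one kernel-verified Lean document; each statement's English description precedes it below -/
import Mathlib

section
/- Let ρ be a function parameter of class ℬ^{+−} and let 0 < q ≤ ∞. Then ‖ρ(t)⁻¹ min(1,t)‖_{L^q_*} < ∞, i.e. ∫₀^∞ (min(1,t)/ρ(t))^q dt/t < ∞ when q < ∞, and sup_{t>0} min(1,t)/ρ(t) < ∞ when q = ∞. -/
open Filter Set MeasureTheory ENNReal NNReal

noncomputable section

/-! ### Function parameters -/

/-- `rbar ρ s = sup_{t>0} ρ(s t)/ρ(t)`. -/
def rbar (ρ : ℝ → ℝ) (s : ℝ) : ℝ := sSup {r : ℝ | ∃ t > 0, r = ρ (s * t) / ρ t}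

/-- The class `ℬ` of function parameters. -/
structure IsClassB (ρ : ℝ → ℝ) : Prop where
  pos : ∀ t > 0, 0 < ρ t
  cont : ContinuousOn ρ (Set.Ioi 0)
  one : ρ 1 = 1
  bdd : ∀ s > 0, BddAbove {r : ℝ | ∃ t > 0, r = ρ (s * t) / ρ t}

/-- The class `ℬ^{+-}` of function parameters. -/
structure IsClassBpm (ρ : ℝ → ℝ) extends IsClassB ρ : Prop where
  integ : MeasureTheory.IntegrableOn (fun t => min 1 t⁻¹ * rbar ρ t * t⁻¹) (Set.Ioi 0)

/-- Pseudo-concavity of a function parameter. -/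
def IsPseudoConcave (ρ : ℝ → ℝ) : Prop :=
  ∃ C > 0, ∀ s > 0, ∀ t > 0, ρ t ≤ C * max 1 (t / s) * ρ s

/-! ### `ℓ^q` norms of two-sided sequences with values in `ℝ≥0∞` -/

/-- The `ℓ^q(ℤ)` norm of a sequence of extended reals. -/
def eLq (q : ℝ≥0∞) (a : ℤ → ℝ≥0∞) : ℝ≥0∞ :=
  if q = ∞ then ⨆ n, a n else (∑' n, a n ^ q.toReal) ^ (1 / q.toReal)

/-! ### Extended-real-valued norms -/

/-- `N : V → ℝ≥0∞` is a complete (Banach) extended norm; its finiteness set is the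
underlying Banach space. -/
structure IsENorm {V : Type*} [AddCommGroup V] [Module ℝ V] (N : V → ℝ≥0∞) : Prop where
  map_zero : N 0 = 0
  eq_zero : ∀ x, N x = 0 → x = 0
  add_le : ∀ x y, N (x + y) ≤ N x + N y
  smul : ∀ (c : ℝ) (x : V), N (c • x) = ENNReal.ofReal |c| * N x
  complete : ∀ u : ℕ → V, (∀ n, N (u n) ≠ ∞) →
    (∀ ε : ℝ, 0 < ε → ∃ n₀ : ℕ, ∀ m ≥ n₀, ∀ n ≥ n₀, N (u m - u n) < ENNReal.ofReal ε) →
    ∃ x, N x ≠ ∞ ∧ Filter.Tendsto (fun n => N (u n - x)) Filter.atTop (nhds 0)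

/-! ### Banach couples realized inside an ambient space -/

section Couple

variable {E₀ E₁ V : Type*} [NormedAddCommGroup E₀] [NormedSpace ℝ E₀]
  [NormedAddCommGroup E₁] [NormedSpace ℝ E₁] [AddCommGroup V] [Module ℝ V]

/-- The extended norm on the ambient space induced by the embedding of one Banach space:
`∞` outside the range of the embedding. -/
def enormOf {E : Type*} [NormedAddCommGroup E] [NormedSpace ℝ E] (i : E →ₗ[ℝ] V) (x : V) : ℝ≥0∞ :=
  ⨅ (a : E) (_ : i a = x), (‖a‖₊ : ℝ≥0∞)

/-- The `K`-functional of the couple `(E₀, E₁)`. -/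
def eKfun (i₀ : E₀ →ₗ[ℝ] V) (i₁ : E₁ →ₗ[ℝ] V) (t : ℝ) (x : V) : ℝ≥0∞ :=
  ⨅ (a : E₀) (b : E₁) (_ : x = i₀ a + i₁ b), ENNReal.ofReal (‖a‖ + t * ‖b‖)

/-- The extended norm of `E₀ + E₁`. -/
def esumNorm (i₀ : E₀ →ₗ[ℝ] V) (i₁ : E₁ →ₗ[ℝ] V) (x : V) : ℝ≥0∞ := eKfun i₀ i₁ 1 x

/-- The extended norm of `E₀ ∩ E₁`. -/
def einterNorm (i₀ : E₀ →ₗ[ℝ] V) (i₁ : E₁ →ₗ[ℝ] V) (x : V) : ℝ≥0∞ :=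
  max (enormOf i₀ x) (enormOf i₁ x)

/-- The extended norm of the interpolation space `(E₀,E₁)_{ρ,q;K}`. -/
def eKNorm (i₀ : E₀ →ₗ[ℝ] V) (i₁ : E₁ →ₗ[ℝ] V) (ρ : ℝ → ℝ) (q : ℝ≥0∞) (x : V) : ℝ≥0∞ :=
  eLq q (fun n => eKfun i₀ i₁ ((2 : ℝ) ^ n) x / ENNReal.ofReal (ρ ((2 : ℝ) ^ n)))

/-- `(a, b)` is a `J`-representation of `x`: `u_n = a n = b n ∈ E₀ ∩ E₁` and
`x = ∑_{n ∈ ℤ} u_n` with convergence in `E₀ + E₁`. -/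
def IsJRep (i₀ : E₀ →ₗ[ℝ] V) (i₁ : E₁ →ₗ[ℝ] V) (x : V) (a : ℤ → E₀) (b : ℤ → E₁) : Prop :=
  (∀ n, i₀ (a n) = i₁ (b n)) ∧
  ∀ ε : ℝ, 0 < ε → ∃ F : Finset ℤ, ∀ G : Finset ℤ, F ⊆ G →
    esumNorm i₀ i₁ (x - ∑ n ∈ G, i₀ (a n)) < ENNReal.ofReal ε

/-- The extended norm of the interpolation space `(E₀,E₁)_{ρ,q;J}`. -/
def eJNorm (i₀ : E₀ →ₗ[ℝ] V) (i₁ : E₁ →ₗ[ℝ] V) (ρ : ℝ → ℝ) (q : ℝ≥0∞) (x : V) : ℝ≥0∞ :=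
  ⨅ (a : ℤ → E₀) (b : ℤ → E₁) (_ : IsJRep i₀ i₁ x a b),
    eLq q (fun n => ENNReal.ofReal (max ‖a n‖ ((2 : ℝ) ^ n * ‖b n‖) / ρ ((2 : ℝ) ^ n)))

/-- `(E₀, E₁)` is a Banach couple: both spaces are complete and continuously embedded
in the Hausdorff topological vector space `V`. -/
structure IsBanachCouple [TopologicalSpace V] (i₀ : E₀ →ₗ[ℝ] V) (i₁ : E₁ →ₗ[ℝ] V) : Prop where
  t2 : T2Space V
  contAdd : ContinuousAdd V
  contSMul : ContinuousSMul ℝ V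
  complete₀ : CompleteSpace E₀
  complete₁ : CompleteSpace E₁
  inj₀ : Function.Injective i₀
  inj₁ : Function.Injective i₁
  cont₀ : Continuous i₀
  cont₁ : Continuous i₁

/-- `N` is (the extended norm of) an intermediate space for the couple `(E₀, E₁)`. -/
def IsIntermediate (i₀ : E₀ →ₗ[ℝ] V) (i₁ : E₁ →ₗ[ℝ] V) (N : V → ℝ≥0∞) : Prop :=
  IsENorm N ∧
  (∃ C > 0, ∀ x : V, N x ≤ ENNReal.ofReal C * einterNorm i₀ i₁ x) ∧
  (∃ C > 0, ∀ x : V, esumNorm i₀ i₁ x ≤ ENNReal.ofReal C * N x)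

/-- `N` is an intermediate space of class `J_ρ(E₀,E₁)`, i.e. `(E₀,E₁)_{ρ,1;J} ↪ N`. -/
def IsClassJ (i₀ : E₀ →ₗ[ℝ] V) (i₁ : E₁ →ₗ[ℝ] V) (ρ : ℝ → ℝ) (N : V → ℝ≥0∞) : Prop :=
  IsIntermediate i₀ i₁ N ∧ ∃ C > 0, ∀ x : V, N x ≤ ENNReal.ofReal C * eJNorm i₀ i₁ ρ 1 x

/-- `N` is an intermediate space of class `K_ρ(E₀,E₁)`, i.e. `N ↪ (E₀,E₁)_{ρ,∞;K}`. -/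
def IsClassK (i₀ : E₀ →ₗ[ℝ] V) (i₁ : E₁ →ₗ[ℝ] V) (ρ : ℝ → ℝ) (N : V → ℝ≥0∞) : Prop :=
  IsIntermediate i₀ i₁ N ∧ ∃ C > 0, ∀ x : V, eKNorm i₀ i₁ ρ ⊤ x ≤ ENNReal.ofReal C * N x

end Couple

/-! ### The approximation hypothesis (AP) -/

/-- The couple with extended norms `N₀, N₁` satisfies the approximation hypothesis (AP). -/
def SatisfiesAP {V : Type*} [AddCommGroup V] [Module ℝ V] (N₀ N₁ : V → ℝ≥0∞) : Prop :=
  ∃ (P Pp Pm : ℕ → V →ₗ[ℝ] V) (C : ℝ≥0∞) (c : ℕ → ℝ≥0∞),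
    0 < C ∧ C ≠ ∞ ∧ Filter.Tendsto c Filter.atTop (nhds 0) ∧
    (∀ (n : ℕ) (x y : V), N₀ x ≠ ∞ → N₁ y ≠ ∞ →
      (P n (x + y) + Pp n (x + y) + Pm n (x + y) = x + y ∧
        N₀ (P n (x + y)) ≠ ∞ ∧ N₁ (P n (x + y)) ≠ ∞)) ∧
    (∀ n x, N₀ (P n x) ≤ C * N₀ x) ∧ (∀ n x, N₁ (P n x) ≤ C * N₁ x) ∧
    (∀ n x, N₀ (Pp n x) ≤ C * N₀ x) ∧ (∀ n x, N₁ (Pp n x) ≤ C * N₁ x) ∧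
    (∀ n x, N₀ (Pm n x) ≤ C * N₀ x) ∧ (∀ n x, N₁ (Pm n x) ≤ C * N₁ x) ∧
    (∀ n x, N₀ x ≠ ∞ → N₁ (Pp n x) ≤ c n * N₀ x) ∧
    (∀ n x, N₁ x ≠ ∞ → N₀ (Pm n x) ≤ c n * N₁ x)

/-! ### Bilinear operators -/

section Bilinear

variable {VE VF VG : Type*} [AddCommGroup VG]

/-- The norm of a bilinear operator between spaces given by extended norms. -/
def eBilNorm (NE : VE → ℝ≥0∞) (NF : VF → ℝ≥0∞) (NG : VG → ℝ≥0∞) (T : VE → VF → VG) : ℝ≥0∞ :=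
  ⨆ (x : VE) (_ : NE x ≤ 1) (y : VF) (_ : NF y ≤ 1), NG (T x y)

/-- Boundedness of a bilinear operator between spaces given by extended norms. -/
def eBilBdd (NE : VE → ℝ≥0∞) (NF : VF → ℝ≥0∞) (NG : VG → ℝ≥0∞) (T : VE → VF → VG) : Prop :=
  ∃ M : ℝ≥0, ∀ x y, NG (T x y) ≤ (M : ℝ≥0∞) * NE x * NF y

/-- Compactness of a bilinear operator: the image of the product of unit balls is
totally bounded in the target. -/
def eBilCompact (NE : VE → ℝ≥0∞) (NF : VF → ℝ≥0∞) (NG : VG → ℝ≥0∞) (T : VE → VF → VG) : Prop :=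
  ∀ ε : ℝ, 0 < ε → ∃ D : Finset VG, ∀ x y, NE x ≤ 1 → NF y ≤ 1 →
    ∃ c ∈ D, NG (T x y - c) < ENNReal.ofReal ε

end Bilinear

/-! ### A generic K-functional for a couple given by two extended norms -/

/-- Generic `K`-functional for a couple described by two extended norms on `W`. -/
def eKgen {W : Type*} [AddCommGroup W] (N₀ N₁ : W → ℝ≥0∞) (t : ℝ) (x : W) : ℝ≥0∞ :=
  ⨅ y : W, (N₀ (x - y) + ENNReal.ofReal t * N₁ y)

/-- The `(ρ,q;K)`-interpolation extended norm for a couple given by two extended norms. -/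
def eKNormGen {W : Type*} [AddCommGroup W] (N₀ N₁ : W → ℝ≥0∞) (ρ : ℝ → ℝ) (q : ℝ≥0∞)
    (x : W) : ℝ≥0∞ :=
  eLq q (fun n => eKgen N₀ N₁ ((2 : ℝ) ^ n) x / ENNReal.ofReal (ρ ((2 : ℝ) ^ n)))

/-! ### Lions and Persson approximation conditions -/

section LP

variable {E₀ E₁ V : Type*} [NormedAddCommGroup E₀] [NormedSpace ℝ E₀]
  [NormedAddCommGroup E₁] [NormedSpace ℝ E₁] [AddCommGroup V] [Module ℝ V]

/-- Lions' approximation condition for the couple `(E₀, E₁)`. -/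
def LionsCondition (i₀ : E₀ →ₗ[ℝ] V) (i₁ : E₁ →ₗ[ℝ] V) : Prop :=
  ∃ P : ℕ → V →ₗ[ℝ] V,
    (∀ (n : ℕ) (a : E₀), einterNorm i₀ i₁ (P n (i₀ a)) ≠ ∞) ∧
    (∀ (n : ℕ) (b : E₁), einterNorm i₀ i₁ (P n (i₁ b)) ≠ ∞) ∧
    (∀ a : E₀, Filter.Tendsto (fun n => enormOf i₀ (P n (i₀ a) - i₀ a)) Filter.atTop (nhds 0)) ∧
    (∀ b : E₁, Filter.Tendsto (fun n => enormOf i₁ (P n (i₁ b) - i₁ b)) Filter.atTop (nhds 0))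

/-- Persson's approximation condition for the couple `(E₀, E₁)`. -/
def PerssonCondition (i₀ : E₀ →ₗ[ℝ] V) (i₁ : E₁ →ₗ[ℝ] V) : Prop :=
  ∀ K : Set E₀, IsCompact K →
    ∃ (C : ℝ) (P : Set (V →ₗ[ℝ] V)), 0 < C ∧
      (∀ p ∈ P,
        (∀ a : E₀, einterNorm i₀ i₁ (p (i₀ a)) ≠ ∞ ∧
          enormOf i₀ (p (i₀ a)) ≤ ENNReal.ofReal (C * ‖a‖)) ∧
        (∀ b : E₁, einterNorm i₀ i₁ (p (i₁ b)) ≠ ∞ ∧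
          enormOf i₁ (p (i₁ b)) ≤ ENNReal.ofReal (C * ‖b‖))) ∧
      (∀ ε > 0, ∃ p ∈ P, ∀ x ∈ K, enormOf i₀ (p (i₀ x) - i₀ x) < ENNReal.ofReal ε)

end LP

end

lemma aux_decay (f : ℝ → ℝ) (hf : ContinuousOn f (Set.Ici 1)) (hpos : ∀ t ≥ 1, 0 ≤ f t)
    (s r : ℝ) (hs : 1 < s) (hr0 : 0 < r) (hr1 : r < 1)
    (h : ∀ t ≥ 1, f (s * t) ≤ r * f t) :
    ∃ C : ℝ, 0 < C ∧ ∃ α : ℝ, 0 < α ∧ ∀ t ≥ 1, f t ≤ C * t ^ (-α) := by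
  have hs0 : 0 < s := by linarith
  have hls : 0 < Real.log s := Real.log_pos hs
  have hlr : Real.log r < 0 := Real.log_neg hr0 hr1
  set α : ℝ := -Real.log r / Real.log s with hα
  have hα0 : 0 < α := div_pos (by linarith) hls
  have hsα : s ^ (-α) = r := by
    rw [Real.rpow_def_of_pos hs0, hα]
    have : Real.log s * -(-Real.log r / Real.log s) = Real.log r := by field_simp
    rw [this, Real.exp_log hr0]
  obtain ⟨M, hM⟩ := (isCompact_Icc (a := (1 : ℝ)) (b := s)).bddAbove_image
    (hf.mono Set.Icc_subset_Ici_self)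
  have hM' : ∀ u, 1 ≤ u → u ≤ s → f u ≤ M := fun u h1 h2 => hM ⟨u, ⟨h1, h2⟩, rfl⟩
  have hM0 : 0 ≤ M := (hpos 1 le_rfl).trans (hM' 1 le_rfl hs.le)
  refine ⟨(M + 1) * r⁻¹, by positivity, α, hα0, ?_⟩
  have key : ∀ n : ℕ, ∀ u, 1 ≤ u → u ≤ s → f (s ^ n * u) ≤ (M + 1) * r⁻¹ * (s ^ n * u) ^ (-α) := by
    intro n
    induction n with
    | zero =>
      intro u h1 h2
      have h3 : r ≤ u ^ (-α) := by
        rw [← hsα]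
        exact Real.rpow_le_rpow_of_nonpos (by linarith) h2 (by linarith)
      simp only [pow_zero, one_mul]
      calc f u ≤ M + 1 := by linarith [hM' u h1 h2]
        _ = (M + 1) * r⁻¹ * r := by field_simp
        _ ≤ _ := by gcongr
    | succ n ih =>
      intro u h1 h2
      have h4 : 1 ≤ s ^ n * u := one_le_mul_of_one_le_of_one_le (one_le_pow₀ hs.le) h1
      have h5 : s ^ (n + 1) * u = s * (s ^ n * u) := by ring
      rw [h5, Real.mul_rpow hs0.le (by linarith), hsα]
      calc _ ≤ r * f (s ^ n * u) := h _ h4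
        _ ≤ r * ((M + 1) * r⁻¹ * (s ^ n * u) ^ (-α)) := by gcongr; exact ih u h1 h2
        _ = _ := by ring
  intro t ht
  obtain ⟨n, hn1, hn2⟩ := exists_nat_pow_near ht hs
  have hp : 0 < s ^ n := by positivity
  have := key n (t / s ^ n) ((one_le_div hp).2 hn1)
    ((div_le_iff₀ hp).2 (by rw [← pow_succ']; exact hn2.le))
  rwa [mul_div_cancel₀ _ hp.ne'] at this

lemma aux_rbar (ρ : ℝ → ℝ) (hρ : IsClassB ρ) (s t : ℝ) (hs : 0 < s) (ht : 0 < t) :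
    ρ (s * t) ≤ rbar ρ s * ρ t := by
  rw [← div_le_iff₀ (hρ.pos t ht)]
  exact le_csSup (hρ.bdd s hs) ⟨t, ht, rfl⟩

lemma aux_rbar_pos (ρ : ℝ → ℝ) (hρ : IsClassB ρ) (s : ℝ) (hs : 0 < s) : 0 < rbar ρ s := by
  have := aux_rbar ρ hρ s 1 hs one_pos
  rw [hρ.one, mul_one, mul_one] at this
  exact (hρ.pos s hs).trans_le this

lemma aux_small (ρ : ℝ → ℝ) (hρ : IsClassBpm ρ) : ∃ s, 0 < s ∧ s < 1 ∧ rbar ρ s < 1 := by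
  by_contra! hcon
  have h1 : IntegrableOn (fun t : ℝ => t ^ (-1 : ℝ)) (Set.Ioo 0 1) := by
    refine Integrable.mono' (hρ.integ.mono_set Set.Ioo_subset_Ioi_self)
      (by fun_prop) ?_
    refine ae_restrict_of_forall_mem measurableSet_Ioo fun t ht => ?_
    have h2 := hcon t ht.1 ht.2
    have h3 : 0 < t⁻¹ := inv_pos.2 ht.1
    rw [min_eq_left ((one_le_inv₀ ht.1).2 ht.2.le), Real.rpow_neg_one, Real.norm_of_nonneg h3.le]
    nlinarith
  rw [intervalIntegral.integrableOn_Ioo_rpow_iff one_pos] at h1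
  exact lt_irrefl _ h1

lemma aux_large (ρ : ℝ → ℝ) (hρ : IsClassBpm ρ) : ∃ s, 1 < s ∧ rbar ρ s < s := by
  by_contra! hcon
  have h1 : IntegrableOn (fun t : ℝ => t ^ (-1 : ℝ)) (Set.Ioi 1) := by
    refine Integrable.mono' (hρ.integ.mono_set (Set.Ioi_subset_Ioi zero_le_one))
      (by fun_prop) ?_
    refine ae_restrict_of_forall_mem measurableSet_Ioi fun t ht => ?_
    have ht' : 1 < t := ht
    have ht0 : 0 < t := by linarith
    have h2 := hcon t ht
    have h3 : 0 < t⁻¹ := inv_pos.2 ht0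
    rw [min_eq_right (inv_le_one_of_one_le₀ ht'.le), Real.rpow_neg_one, Real.norm_of_nonneg h3.le]
    have : 1 ≤ t⁻¹ * rbar ρ t := by
      rw [← inv_mul_cancel₀ ht0.ne']
      gcongr
    nlinarith
  rw [integrableOn_Ioi_rpow_iff one_pos] at h1
  exact lt_irrefl _ h1

lemma aux_bounds (ρ : ℝ → ℝ) (hρ : IsClassBpm ρ) :
    (∃ C : ℝ, 0 < C ∧ ∃ α : ℝ, 0 < α ∧ ∀ t ≥ 1, min 1 t / ρ t ≤ C * t ^ (-α)) ∧
    (∃ C : ℝ, 0 < C ∧ ∃ α : ℝ, 0 < α ∧ ∀ t, 0 < t → t ≤ 1 → min 1 t / ρ t ≤ C * t ^ α) := by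
  have hB := hρ.toIsClassB
  constructor
  · obtain ⟨s, hs0, hs1, hs⟩ := aux_small ρ hρ
    obtain ⟨C, hC, α, hα, h⟩ := aux_decay (fun t => 1 / ρ t)
      (ContinuousOn.div continuousOn_const
        (hB.cont.mono fun t (ht : 1 ≤ t) => show 0 < t by linarith)
        (fun t (ht : 1 ≤ t) => (hB.pos t (by linarith)).ne'))
      (fun t ht => (one_div_pos.2 (hB.pos t (by linarith))).le) s⁻¹ (rbar ρ s)
      ((one_lt_inv₀ hs0).2 hs1) (aux_rbar_pos ρ hB s hs0) hs
      (by
        intro t ht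
        have ht0 : 0 < t := by linarith
        have h1 := aux_rbar ρ hB s (s⁻¹ * t) hs0 (by positivity)
        rw [mul_inv_cancel_left₀ hs0.ne'] at h1
        have h2 := hB.pos t ht0
        have h3 := hB.pos (s⁻¹ * t) (by positivity)
        rw [mul_one_div, div_le_div_iff₀ h3 h2]
        linarith)
    refine ⟨C, hC, α, hα, fun t ht => ?_⟩
    rw [min_eq_left ht]
    exact h t ht
  · obtain ⟨s, hs1, hs⟩ := aux_large ρ hρ
    have hs0 : 0 < s := by linarith
    obtain ⟨C, hC, α, hα, h⟩ := aux_decay (fun t => t⁻¹ / ρ t⁻¹)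
      (by
        have hi : ContinuousOn (fun t : ℝ => t⁻¹) (Set.Ici 1) :=
          continuousOn_id.inv₀ fun t (ht : 1 ≤ t) => show t ≠ 0 by positivity
        refine ContinuousOn.div hi (hB.cont.comp hi ?_) ?_
        · intro t (ht : 1 ≤ t)
          exact inv_pos.2 (show (0:ℝ) < t by linarith)
        · intro t (ht : 1 ≤ t)
          exact (hB.pos _ (inv_pos.2 (show (0:ℝ) < t by linarith))).ne')
      (fun t ht => by
        have ht0 : 0 < t⁻¹ := inv_pos.2 (by linarith)
        exact (div_pos ht0 (hB.pos _ ht0)).le) s (rbar ρ s / s)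
      hs1 (div_pos (aux_rbar_pos ρ hB s hs0) hs0) ((div_lt_one hs0).2 hs)
      (by
        intro t ht
        have ht0 : 0 < t := by linarith
        have h1 := aux_rbar ρ hB s (s * t)⁻¹ hs0 (by positivity)
        have e : s * (s * t)⁻¹ = t⁻¹ := by field_simp
        rw [e] at h1
        have h2 := hB.pos t⁻¹ (by positivity)
        have h3 := hB.pos (s * t)⁻¹ (by positivity)
        rw [div_mul_div_comm, div_le_div_iff₀ h3 (by positivity), ← e]
        rw [← e] at h1
        have h4 : 0 < s * (s * t)⁻¹ := by positivity
        nlinarith)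
    refine ⟨C, hC, α, hα, fun t ht ht1 => ?_⟩
    have := h t⁻¹ ((one_le_inv₀ ht).2 ht1)
    rw [min_eq_right ht1]
    simpa [Real.inv_rpow ht.le, Real.rpow_neg ht.le] using this

/-- For `ρ ∈ ℬ^{+-}` and `0 < q ≤ ∞`, `‖ρ(t)⁻¹ min(1,t)‖_{L^q_*} < ∞`. -/
theorem statement13 (ρ : ℝ → ℝ) (hρ : IsClassBpm ρ) (q : ℝ≥0∞) (hq : 0 < q) :
    (q ≠ ∞ → MeasureTheory.IntegrableOn
      (fun t => (min 1 t / ρ t) ^ q.toReal * t⁻¹) (Set.Ioi 0)) ∧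
    (q = ∞ → ∃ M : ℝ, ∀ t > 0, min 1 t / ρ t ≤ M) := by
  have hB := hρ.toIsClassB
  obtain ⟨⟨C, hC, α, hα, hbig⟩, ⟨D, hD, β, hβ, hsmall⟩⟩ := aux_bounds ρ hρ
  have hnn : ∀ t > 0, 0 ≤ min 1 t / ρ t := fun t ht =>
    div_nonneg (le_min zero_le_one (le_of_lt ht)) (hB.pos t ht).le
  constructor
  · intro hqt
    set p := q.toReal with hp
    have hp0 : 0 < p := ENNReal.toReal_pos hq.ne' hqt
    have hcont : ContinuousOn (fun t => (min 1 t / ρ t) ^ p * t⁻¹) (Set.Ioi 0) := by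
      refine ContinuousOn.mul (ContinuousOn.rpow_const (ContinuousOn.div (by fun_prop) hB.cont
        fun t ht => (hB.pos t ht).ne') fun t _ => Or.inr hp0.le)
        (continuousOn_id.inv₀ fun t (ht : 0 < t) => ht.ne')
    have hmain : ∀ t > 0, ∀ E > 0, ∀ γ : ℝ, min 1 t / ρ t ≤ E * t ^ γ →
        ‖(min 1 t / ρ t) ^ p * t⁻¹‖ ≤ E ^ p * t ^ (γ * p - 1) := by
      intro t ht E hE γ hle
      have h0 := hnn t ht
      rw [Real.norm_of_nonneg (mul_nonneg (Real.rpow_nonneg h0 p) (inv_pos.2 ht).le)]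
      calc (min 1 t / ρ t) ^ p * t⁻¹ ≤ (E * t ^ γ) ^ p * t⁻¹ := by gcongr
        _ = _ := by
          rw [Real.mul_rpow hE.le (Real.rpow_nonneg (le_of_lt ht) _), ← Real.rpow_mul (le_of_lt ht),
            Real.rpow_sub ht, Real.rpow_one]
          ring
    have e : Set.Ioi (0 : ℝ) = Set.Ioc 0 1 ∪ Set.Ioi 1 := (Set.Ioc_union_Ioi_eq_Ioi zero_le_one).symm
    have hs1 : Set.Ioc (0 : ℝ) 1 ⊆ Set.Ioi 0 := Set.Ioc_subset_Ioi_self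
    have hs2 : Set.Ioi (1 : ℝ) ⊆ Set.Ioi 0 := Set.Ioi_subset_Ioi zero_le_one
    have hi1 : IntegrableOn (fun t : ℝ => D ^ p * t ^ (β * p - 1)) (Set.Ioc 0 1) := by
      refine Integrable.const_mul ?_ _
      rw [← IntegrableOn, integrableOn_Ioc_iff_integrableOn_Ioo,
        intervalIntegral.integrableOn_Ioo_rpow_iff one_pos]
      nlinarith [mul_pos hβ hp0]
    have hi2 : IntegrableOn (fun t : ℝ => C ^ p * t ^ (-α * p - 1)) (Set.Ioi 1) := by
      refine Integrable.const_mul ?_ _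
      rw [← IntegrableOn, integrableOn_Ioi_rpow_iff one_pos]
      nlinarith [mul_pos hα hp0]
    rw [e]
    refine IntegrableOn.union ?_ ?_
    · exact Integrable.mono' hi1 ((hcont.mono hs1).aestronglyMeasurable measurableSet_Ioc)
        (ae_restrict_of_forall_mem measurableSet_Ioc fun t ht =>
          hmain t ht.1 D hD β (hsmall t ht.1 ht.2))
    · exact Integrable.mono' hi2 ((hcont.mono hs2).aestronglyMeasurable measurableSet_Ioi)
        (ae_restrict_of_forall_mem measurableSet_Ioi fun t ht =>
          hmain t (hs2 ht) C hC (-α) (hbig t (le_of_lt ht)))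
  · intro _
    refine ⟨max C D, fun t ht => ?_⟩
    rcases le_total 1 t with h | h
    · refine (hbig t h).trans (le_trans ?_ (le_max_left _ _))
      exact mul_le_of_le_one_right hC.le (Real.rpow_le_one_of_one_le_of_nonpos h (by linarith))
    · refine (hsmall t ht h).trans (le_trans ?_ (le_max_right _ _))
      exact mul_le_of_le_one_right hD.le (Real.rpow_le_one (le_of_lt ht) h hβ.le)
end

section
/- Let (E₀,E₁) be a Banach couple, ρ a function parameter of class ℬ^{+−} and 0 < q ≤ ∞. Then there is a constant C > 0 such that for every nonzero x ∈ E₀∩E₁, ‖x‖_{(E₀,E₁)_{ρ,q;J}} ≤ C ‖x‖_{E₀} ρ̄(‖x‖_{E₁}/‖x‖_{E₀}). -/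
open Filter Set MeasureTheory ENNReal NNReal

/-- for a Banach couple `(E₀,E₁)`, `ρ ∈ ℬ^{+-}` and `0 < q ≤ ∞`, there is
`C > 0` such that `‖x‖_{(E₀,E₁)_{ρ,q;J}} ≤ C ‖x‖_{E₀} ρ̄(‖x‖_{E₁}/‖x‖_{E₀})` for every
nonzero `x ∈ E₀ ∩ E₁`. -/
theorem statement14 {E₀ E₁ V : Type*}
    [NormedAddCommGroup E₀] [NormedSpace ℝ E₀] [NormedAddCommGroup E₁] [NormedSpace ℝ E₁]
    [AddCommGroup V] [Module ℝ V] [TopologicalSpace V]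
    (i₀ : E₀ →ₗ[ℝ] V) (i₁ : E₁ →ₗ[ℝ] V) (hE : IsBanachCouple i₀ i₁)
    (ρ : ℝ → ℝ) (hρ : IsClassBpm ρ) (q : ℝ≥0∞) (hq : 0 < q) :
    ∃ C > 0, ∀ (a : E₀) (b : E₁), i₀ a = i₁ b → a ≠ 0 →
      eJNorm i₀ i₁ ρ q (i₀ a) ≤ ENNReal.ofReal (C * (‖a‖ * rbar ρ (‖b‖ / ‖a‖))) := by
  obtain ⟨t₀, ht₀, hmin⟩ := (isCompact_Icc (a := (1/2 : ℝ)) (b := 1)).exists_isMinOn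
    ⟨1, by norm_num⟩ (hρ.cont.mono (fun x hx => lt_of_lt_of_le (by norm_num) hx.1))
  have ht₀pos : 0 < t₀ := lt_of_lt_of_le (by norm_num) ht₀.1
  have hm := hρ.pos t₀ ht₀pos
  refine ⟨(ρ t₀)⁻¹, inv_pos.mpr hm, ?_⟩
  intro a b hab ha
  have hb : b ≠ 0 := by
    rintro rfl
    apply ha
    apply hE.inj₀
    rw [hab, map_zero, map_zero]
  have hna : 0 < ‖a‖ := norm_pos_iff.mpr ha
  have hnb : 0 < ‖b‖ := norm_pos_iff.mpr hb
  obtain ⟨n, hn1, hn2⟩ := exists_mem_Ico_zpow (div_pos hna hnb) (one_lt_two (α := ℝ))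
  have h2n : (0 : ℝ) < 2 ^ n := by positivity
  have h2b : 2 ^ n * ‖b‖ ≤ ‖a‖ := (le_div_iff₀ hnb).mp hn1
  have h2b' : ‖a‖ < 2 * (2 ^ n * ‖b‖) := by
    have := (div_lt_iff₀ hnb).mp hn2
    rw [zpow_add_one₀ (by norm_num)] at this
    linarith
  have hs : ‖b‖ / ‖a‖ * 2 ^ n ∈ Icc (1/2 : ℝ) 1 := by
    rw [div_mul_eq_mul_div]
    constructor
    · rw [le_div_iff₀ hna]; linarith
    · rw [div_le_iff₀ hna]; linarith
  have h1 : ρ t₀ ≤ ρ (‖b‖ / ‖a‖ * 2 ^ n) := hmin hs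
  have h2 : ρ (‖b‖ / ‖a‖ * 2 ^ n) / ρ (2 ^ n) ≤ rbar ρ (‖b‖ / ‖a‖) :=
    le_csSup (hρ.bdd _ (div_pos hnb hna)) ⟨2 ^ n, h2n, rfl⟩
  have hρn := hρ.pos _ h2n
  have h3 : ‖a‖ / ρ (2 ^ n) ≤ (ρ t₀)⁻¹ * (‖a‖ * rbar ρ (‖b‖ / ‖a‖)) := by
    have h4 : ρ t₀ / ρ (2 ^ n) ≤ rbar ρ (‖b‖ / ‖a‖) :=
      le_trans (div_le_div_of_nonneg_right h1 hρn.le) h2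
    calc ‖a‖ / ρ (2 ^ n) = (ρ t₀)⁻¹ * (‖a‖ * (ρ t₀ / ρ (2 ^ n))) := by
          field_simp
      _ ≤ _ := by gcongr
  have hrep : IsJRep i₀ i₁ (i₀ a) (Pi.single n a) (Pi.single n b) := by
    constructor
    · intro k
      by_cases hk : k = n
      · subst hk; simpa using hab
      · simp [Pi.single_eq_of_ne hk]
    · intro ε hε
      refine ⟨{n}, fun G hG => ?_⟩
      have hnG : n ∈ G := hG (by simp)
      have : ∑ k ∈ G, i₀ ((Pi.single n a : ℤ → E₀) k) = i₀ a := by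
        rw [Finset.sum_eq_single_of_mem n hnG]
        · simp
        · intro k _ hk; simp [Pi.single_eq_of_ne hk]
      rw [this, sub_self]
      refine lt_of_le_of_lt ?_ (ENNReal.ofReal_pos.mpr hε)
      unfold esumNorm eKfun
      refine iInf_le_of_le 0 (iInf_le_of_le 0 (iInf_le_of_le (by simp) (by simp)))
  refine le_trans ?_ (ENNReal.ofReal_le_ofReal h3)
  unfold eJNorm
  refine iInf_le_of_le _ (iInf_le_of_le _ (iInf_le_of_le hrep ?_))
  have hzero : ∀ k, k ≠ n → ENNReal.ofReal (max ‖(Pi.single n a : ℤ → E₀) k‖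
      ((2 : ℝ) ^ k * ‖(Pi.single n b : ℤ → E₁) k‖) / ρ ((2 : ℝ) ^ k)) = 0 := by
    intro k hk; simp [Pi.single_eq_of_ne hk]
  have hself : ENNReal.ofReal (max ‖(Pi.single n a : ℤ → E₀) n‖
      ((2 : ℝ) ^ n * ‖(Pi.single n b : ℤ → E₁) n‖) / ρ ((2 : ℝ) ^ n))
      = ENNReal.ofReal (‖a‖ / ρ (2 ^ n)) := by
    rw [Pi.single_eq_same, Pi.single_eq_same, max_eq_left h2b]
  unfold eLq
  beta_reduce
  split_ifs with hqt
  · refine iSup_le fun k => ?_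
    by_cases hk : k = n
    · subst hk; exact hself.le
    · exact (hzero k hk).le.trans zero_le
  · have hq' : 0 < q.toReal := ENNReal.toReal_pos hq.ne' hqt
    rw [tsum_eq_single n, hself, ← ENNReal.rpow_mul, mul_one_div_cancel hq'.ne', ENNReal.rpow_one]
    intro k hk
    rw [hzero k hk, ENNReal.zero_rpow_of_pos hq']
end

section
/- Let (E₀,E₁) be a Banach couple, ρ a function parameter of class ℬ^{+−} and 0 < q ≤ ∞. Then (E₀,E₁)_{ρ,q;J} = (E₀,E₁)_{ρ,q;K} with equivalent norms (the Equivalence Theorem between the J-method and the K-method with function parameter). -/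
open Filter Set MeasureTheory ENNReal NNReal

lemma aux_summable (f : ℕ → ℝ) (hf : ∀ n, 0 ≤ f n) (N : ℕ) (d : ℝ) (hd : d < 1)
    (h : ∀ n, f (n + N) ≤ d * f n) : Summable f := by
  refine summable_of_sum_range_le (c := (∑ i ∈ Finset.range N, f i) / (1 - d)) hf fun M => ?_
  have hd' : 0 < 1 - d := by linarith
  rw [le_div_iff₀ hd']
  have h1 : ∑ i ∈ Finset.range M, f i ≤ ∑ i ∈ Finset.range (N + M), f i :=
    Finset.sum_le_sum_of_subset_of_nonneg
      (Finset.range_subset_range.2 (by omega)) (fun i _ _ => hf i)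
  rw [Finset.sum_range_add] at h1
  have h2 : ∑ i ∈ Finset.range M, f (N + i) ≤ d * ∑ i ∈ Finset.range M, f i := by
    rw [Finset.mul_sum]
    exact Finset.sum_le_sum fun i _ => by rw [add_comm]; exact h i
  nlinarith

lemma aux_exists_lt_one (f : ℝ → ℝ) (hf : ∀ s, 0 ≤ f s)
    (hi : IntegrableOn f (Ioi 0)) (hsub : ∀ s t, f (s + t) ≤ f s * f t) :
    ∃ N : ℕ, f (N * Real.log 2) < 1 := by
  by_contra hcon
  push Not at hcon
  obtain ⟨N, hN⟩ := exists_nat_gt ((∫ s in Ioi 0, f s) / Real.log 2)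
  have hl : 0 < Real.log 2 := Real.log_pos (by norm_num)
  set L := N * Real.log 2 with hL
  have hL1 : ∫ s in Ioi 0, f s < L := by rwa [div_lt_iff₀ hl] at hN
  have hL0 : 0 ≤ L := by positivity
  have hii : IntervalIntegrable f volume 0 L := by
    rw [intervalIntegrable_iff_integrableOn_Ioc_of_le hL0]
    exact hi.mono_set Ioc_subset_Ioi_self
  have hii2 : IntervalIntegrable (fun s => f (L - s)) volume 0 L := by
    have := (hii.comp_sub_left L).symm
    simpa using this
  have h1 : ∫ s in (0:ℝ)..L, (2:ℝ) ≤ ∫ s in (0:ℝ)..L, (f s + f (L - s)) := by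
    apply intervalIntegral.integral_mono_on hL0 (by simp) (hii.add hii2)
    intro s _
    have h := (hcon N).trans (hsub s (L - s) |>.trans_eq' (by rw [add_sub_cancel]))
    nlinarith [hf s, hf (L - s), sq_nonneg (f s - f (L - s))]
  rw [intervalIntegral.integral_add hii hii2, intervalIntegral.integral_comp_sub_left] at h1
  simp only [sub_self, sub_zero, intervalIntegral.integral_const, smul_eq_mul] at h1
  have h2 : ∫ s in (0:ℝ)..L, f s ≤ ∫ s in Ioi 0, f s := by
    rw [intervalIntegral.integral_of_le hL0]
    exact setIntegral_mono_set hi (Eventually.of_forall hf)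
      (Eventually.of_forall Ioc_subset_Ioi_self)
  linarith

section rho
variable {ρ : ℝ → ℝ}

lemma rbar_le (hρ : IsClassB ρ) {s t : ℝ} (hs : 0 < s) (ht : 0 < t) :
    ρ (s * t) ≤ rbar ρ s * ρ t := by
  rw [← div_le_iff₀ (hρ.pos t ht)]
  exact le_csSup (hρ.bdd s hs) ⟨t, ht, rfl⟩

lemma rbar_pos (hρ : IsClassB ρ) {s : ℝ} (hs : 0 < s) : 0 < rbar ρ s := by
  have := rbar_le hρ hs one_pos
  rw [hρ.one, mul_one, mul_one] at this
  exact (hρ.pos s hs).trans_le this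

lemma rbar_mul (hρ : IsClassB ρ) {s t : ℝ} (hs : 0 < s) (ht : 0 < t) :
    rbar ρ (s * t) ≤ rbar ρ s * rbar ρ t := by
  refine csSup_le ⟨_, 1, one_pos, rfl⟩ ?_
  rintro r ⟨v, hv, rfl⟩
  rw [div_le_iff₀ (hρ.pos v hv), mul_assoc, mul_assoc]
  exact (rbar_le hρ hs (by positivity)).trans
    (mul_le_mul_of_nonneg_left (rbar_le hρ ht hv) (rbar_pos hρ hs).le)

lemma rbar_integ (hρ : IsClassBpm ρ) :
    Integrable (fun s => min 1 (Real.exp (-s)) * rbar ρ (Real.exp s)) := by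
  have h := hρ.integ
  rw [← Real.range_exp, ← image_univ, integrableOn_image_iff_integrableOn_abs_deriv_smul
    MeasurableSet.univ (fun x _ => (Real.hasDerivAt_exp x).hasDerivWithinAt)
    Real.exp_injective.injOn, integrableOn_univ] at h
  refine h.congr (Eventually.of_forall fun x => ?_)
  have := Real.exp_pos x
  simp only [Real.abs_exp, smul_eq_mul, Real.exp_neg]
  field_simp

lemma rbar_neg (hρ : IsClassBpm ρ) : ∃ N : ℕ, rbar ρ ((2:ℝ) ^ (-(N:ℤ))) < 1 := by
  obtain ⟨N, hN⟩ := aux_exists_lt_one (fun s => rbar ρ (Real.exp (-s)))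
    (fun s => (rbar_pos hρ.toIsClassB (Real.exp_pos _)).le) (by
      have h := (rbar_integ hρ).comp_neg.integrableOn (s := Ioi 0)
      refine h.congr_fun (fun s hs => ?_) measurableSet_Ioi
      have : 1 ≤ Real.exp s := Real.one_le_exp (le_of_lt hs)
      simp [this]) (fun s t => by
      simp only [neg_add, Real.exp_add]
      exact rbar_mul hρ.toIsClassB (Real.exp_pos _) (Real.exp_pos _))
  refine ⟨N, ?_⟩
  simpa [Real.exp_neg, Real.exp_nat_mul, Real.exp_log] using hN

lemma rbar_posi (hρ : IsClassBpm ρ) :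
    ∃ N : ℕ, (2:ℝ) ^ (-(N:ℤ)) * rbar ρ ((2:ℝ) ^ (N:ℤ)) < 1 := by
  obtain ⟨N, hN⟩ := aux_exists_lt_one (fun s => Real.exp (-s) * rbar ρ (Real.exp s))
    (fun s => by have := (rbar_pos hρ.toIsClassB (Real.exp_pos s)).le; positivity) (by
      have h := (rbar_integ hρ).integrableOn (s := Ioi 0)
      refine h.congr_fun (fun s hs => ?_) measurableSet_Ioi
      have : Real.exp (-s) ≤ 1 := Real.exp_le_one_iff.2 (by simpa using le_of_lt hs)
      simp [this]) (fun s t => by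
      simp only [neg_add, Real.exp_add]
      have := rbar_mul hρ.toIsClassB (Real.exp_pos s) (Real.exp_pos t)
      calc _ ≤ Real.exp (-s) * Real.exp (-t) * (rbar ρ (Real.exp s) * rbar ρ (Real.exp t)) := by
            gcongr
        _ = _ := by ring)
  refine ⟨N, ?_⟩
  simpa [Real.exp_neg, Real.exp_nat_mul, Real.exp_log] using hN

/-- The kernel of the Hardy-type operator. -/
noncomputable def cker (ρ : ℝ → ℝ) (k : ℤ) : ℝ := min 1 ((2:ℝ) ^ (-k)) * rbar ρ ((2:ℝ) ^ k)

lemma cker_pos (hρ : IsClassB ρ) (k : ℤ) : 0 < cker ρ k := by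
  have := rbar_pos hρ (s := (2:ℝ) ^ k) (by positivity)
  unfold cker
  have : 0 < min 1 ((2:ℝ) ^ (-k)) := lt_min one_pos (by positivity)
  positivity

lemma cker_natCast (n : ℕ) : cker ρ n = (2:ℝ) ^ (-(n:ℤ)) * rbar ρ ((2:ℝ) ^ (n:ℤ)) := by
  unfold cker
  rw [min_eq_right]
  exact zpow_le_one_of_nonpos₀ (by norm_num) (by omega)

lemma cker_neg_natCast (n : ℕ) : cker ρ (-(n:ℤ)) = rbar ρ ((2:ℝ) ^ (-(n:ℤ))) := by
  unfold cker
  rw [min_eq_left, one_mul]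
  exact one_le_zpow₀ (by norm_num) (by omega)

lemma cker_summable (hρ : IsClassBpm ρ) (p : ℝ) (hp : 0 < p) :
    Summable (fun k : ℤ => cker ρ k ^ p) := by
  have hB := hρ.toIsClassB
  have h0 : ∀ k : ℤ, 0 ≤ cker ρ k := fun k => (cker_pos hB k).le
  have h00 : ∀ k : ℤ, 0 ≤ cker ρ k ^ p := fun k => Real.rpow_nonneg (h0 k) p
  apply Summable.of_nat_of_neg
  · obtain ⟨N, hN⟩ := rbar_posi hρ
    rw [← cker_natCast] at hN
    refine aux_summable _ (fun n => h00 n) N (cker ρ N ^ p)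
      (Real.rpow_lt_one (h0 _) hN hp) fun n => ?_
    rw [← Real.mul_rpow (h0 _) (h0 _)]
    refine Real.rpow_le_rpow (h0 _) ?_ hp.le
    rw [cker_natCast, cker_natCast, cker_natCast]
    have := rbar_mul hB (s := (2:ℝ) ^ (N:ℤ)) (t := (2:ℝ) ^ (n:ℤ)) (by positivity) (by positivity)
    rw [← zpow_add₀ (by norm_num)] at this
    have e1 : ((n + N : ℕ) : ℤ) = (N:ℤ) + n := by push_cast; ring
    rw [e1, neg_add, zpow_add₀ (by norm_num)]
    calc _ ≤ (2:ℝ) ^ (-(N:ℤ)) * (2:ℝ) ^ (-(n:ℤ)) * (rbar ρ (2 ^ (N:ℤ)) * rbar ρ (2 ^ (n:ℤ))) := by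
          gcongr
      _ = _ := by ring
  · obtain ⟨N, hN⟩ := rbar_neg hρ
    rw [← cker_neg_natCast] at hN
    refine aux_summable _ (fun n => h00 _) N (cker ρ (-(N:ℤ)) ^ p)
      (Real.rpow_lt_one (h0 _) hN hp) fun n => ?_
    rw [← Real.mul_rpow (h0 _) (h0 _)]
    refine Real.rpow_le_rpow (h0 _) ?_ hp.le
    rw [cker_neg_natCast, cker_neg_natCast, cker_neg_natCast]
    have := rbar_mul hB (s := (2:ℝ) ^ (-(N:ℤ))) (t := (2:ℝ) ^ (-(n:ℤ)))
      (by positivity) (by positivity)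
    rw [← zpow_add₀ (by norm_num)] at this
    have e1 : -((n + N : ℕ) : ℤ) = -(N:ℤ) + -n := by push_cast; ring
    rwa [e1]

lemma cker_tsum (hρ : IsClassBpm ρ) (p : ℝ) (hp : 0 < p) :
    ∑' k : ℤ, ENNReal.ofReal (cker ρ k) ^ p ≠ ∞ := by
  have := (cker_summable hρ p hp).tsum_ofReal_ne_top
  simpa only [ENNReal.ofReal_rpow_of_pos (cker_pos hρ.toIsClassB _)] using this

end rho

lemma eLq_conv (c : ℤ → ℝ≥0∞) (hc : ∀ p : ℝ, 0 < p → ∑' k, c k ^ p ≠ ∞) (q : ℝ≥0∞) (hq : 0 < q) :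
    ∃ C : ℝ≥0∞, C ≠ ∞ ∧ ∀ a : ℤ → ℝ≥0∞,
      eLq q (fun n => ∑' k, c k * a (n + k)) ≤ C * eLq q a := by
  by_cases hqt : q = ∞
  · refine ⟨∑' k, c k, by simpa using hc 1 one_pos, fun a => ?_⟩
    simp only [eLq, hqt, if_true]
    refine iSup_le fun n => ?_
    rw [← ENNReal.tsum_mul_right]
    exact ENNReal.tsum_le_tsum fun k => by gcongr; exact le_iSup a _
  · set r := q.toReal with hr
    have hr0 : 0 < r := ENNReal.toReal_pos hq.ne' hqt
    set S := ∑' k, c k ^ (1/2 : ℝ) with hS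
    have hSt : S ≠ ∞ := hc _ (by norm_num)
    set T := ∑' k, c k ^ (r/2 : ℝ) with hT
    have hTt : T ≠ ∞ := hc _ (by positivity)
    refine ⟨(S ^ r * T) ^ (1 / r), ?_, fun a => ?_⟩
    · exact ENNReal.rpow_ne_top_of_nonneg (by positivity)
        (ENNReal.mul_ne_top (ENNReal.rpow_ne_top_of_nonneg hr0.le hSt) hTt)
    · simp only [eLq, hqt, if_false, ← hr]
      rw [← ENNReal.mul_rpow_of_nonneg _ _ (by positivity)]
      refine ENNReal.rpow_le_rpow ?_ (by positivity)
      have key : ∀ n, (∑' k, c k * a (n + k)) ^ r ≤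
          S ^ r * ∑' k, c k ^ (r/2) * a (n + k) ^ r := by
        intro n
        have h1 : ∑' k, c k * a (n + k) ≤
            S * (∑' k, c k ^ (r/2) * a (n + k) ^ r) ^ (1/r) := by
          rw [hS, ← ENNReal.tsum_mul_right]
          refine ENNReal.tsum_le_tsum fun k => ?_
          have e : c k = c k ^ (1/2:ℝ) * c k ^ (1/2:ℝ) := by
            rw [← ENNReal.rpow_add_of_nonneg _ _ (by norm_num) (by norm_num)]
            norm_num
          conv_lhs => rw [e, mul_assoc]
          gcongr
          calc c k ^ (1/2:ℝ) * a (n + k) = (c k ^ (r/2) * a (n + k) ^ r) ^ (1/r) := by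
                rw [ENNReal.mul_rpow_of_nonneg _ _ (by positivity), ← ENNReal.rpow_mul,
                  ← ENNReal.rpow_mul]
                have e1 : r / 2 * (1 / r) = 1 / 2 := by field_simp
                have e2 : r * (1 / r) = 1 := by field_simp
                rw [e1, e2, ENNReal.rpow_one]
            _ ≤ _ := by
                gcongr
                exact ENNReal.le_tsum (f := fun k => c k ^ (r/2) * a (n + k) ^ r) k
        calc _ ≤ (S * (∑' k, c k ^ (r/2) * a (n + k) ^ r) ^ (1/r)) ^ r := by gcongr
          _ = _ := by
            rw [ENNReal.mul_rpow_of_nonneg _ _ hr0.le, ← ENNReal.rpow_mul]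
            have e2 : 1 / r * r = 1 := by field_simp
            rw [e2, ENNReal.rpow_one]
      calc _ ≤ ∑' n, S ^ r * ∑' k, c k ^ (r/2) * a (n + k) ^ r := ENNReal.tsum_le_tsum key
        _ = S ^ r * ∑' k, ∑' n, c k ^ (r/2) * a (n + k) ^ r := by
            rw [ENNReal.tsum_mul_left, ENNReal.tsum_comm]
        _ = S ^ r * ∑' k, c k ^ (r/2) * ∑' n, a n ^ r := by
            congr 1
            refine tsum_congr fun k => ?_
            rw [ENNReal.tsum_mul_left]
            congr 1
            exact (Equiv.addRight k).tsum_eq (fun n => a n ^ r)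
        _ = _ := by rw [ENNReal.tsum_mul_right, mul_assoc]

lemma eLq_mono (q : ℝ≥0∞) {a b : ℤ → ℝ≥0∞} (h : ∀ n, a n ≤ b n) : eLq q a ≤ eLq q b := by
  unfold eLq
  split_ifs
  · exact iSup_mono h
  · exact ENNReal.rpow_le_rpow (ENNReal.tsum_le_tsum fun n =>
      ENNReal.rpow_le_rpow (h n) ENNReal.toReal_nonneg) (by positivity)

lemma eLq_const_mul (q : ℝ≥0∞) (hq : 0 < q) (c : ℝ≥0∞) (a : ℤ → ℝ≥0∞) :
    eLq q (fun n => c * a n) = c * eLq q a := by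
  unfold eLq
  split_ifs with h
  · rw [ENNReal.mul_iSup]
  · have hr0 : 0 < q.toReal := ENNReal.toReal_pos hq.ne' h
    simp only [ENNReal.mul_rpow_of_nonneg _ _ hr0.le]
    rw [ENNReal.tsum_mul_left, ENNReal.mul_rpow_of_nonneg _ _ (by positivity), ← ENNReal.rpow_mul]
    have e2 : q.toReal * (1 / q.toReal) = 1 := by field_simp
    rw [e2, ENNReal.rpow_one]

lemma le_eLq (q : ℝ≥0∞) (hq : 0 < q) (a : ℤ → ℝ≥0∞) (n : ℤ) : a n ≤ eLq q a := by
  unfold eLq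
  split_ifs with h
  · exact le_iSup a n
  · have hr0 : 0 < q.toReal := ENNReal.toReal_pos hq.ne' h
    calc a n = (a n ^ q.toReal) ^ (1 / q.toReal) := by
          rw [← ENNReal.rpow_mul]
          have e2 : q.toReal * (1 / q.toReal) = 1 := by field_simp
          rw [e2, ENNReal.rpow_one]
      _ ≤ _ := by
          gcongr
          exact ENNReal.le_tsum (f := fun n => a n ^ q.toReal) n

section K
variable {E₀ E₁ V : Type*} [NormedAddCommGroup E₀] [NormedSpace ℝ E₀]
  [NormedAddCommGroup E₁] [NormedSpace ℝ E₁] [AddCommGroup V] [Module ℝ V]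
  (i₀ : E₀ →ₗ[ℝ] V) (i₁ : E₁ →ₗ[ℝ] V)

lemma eKfun_le (t : ℝ) (x : V) (a : E₀) (b : E₁) (h : x = i₀ a + i₁ b) :
    eKfun i₀ i₁ t x ≤ ENNReal.ofReal (‖a‖ + t * ‖b‖) :=
  iInf_le_of_le a (iInf_le_of_le b (iInf_le_of_le h le_rfl))

lemma eKfun_le₀ (t : ℝ) (a : E₀) : eKfun i₀ i₁ t (i₀ a) ≤ ENNReal.ofReal ‖a‖ := by
  simpa using eKfun_le i₀ i₁ t (i₀ a) a 0 (by simp)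

lemma eKfun_le₁ (t : ℝ) (b : E₁) : eKfun i₀ i₁ t (i₁ b) ≤ ENNReal.ofReal (t * ‖b‖) := by
  simpa using eKfun_le i₀ i₁ t (i₁ b) 0 b (by simp)

lemma eKfun_zero (t : ℝ) : eKfun i₀ i₁ t 0 = 0 := by
  simpa using eKfun_le₀ i₀ i₁ t 0

lemma eKfun_lt {t : ℝ} {x : V} {M : ℝ≥0∞} (h : eKfun i₀ i₁ t x < M) :
    ∃ a b, x = i₀ a + i₁ b ∧ ENNReal.ofReal (‖a‖ + t * ‖b‖) < M := by
  simp only [eKfun, iInf_lt_iff] at h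
  obtain ⟨a, b, h1, h2⟩ := h
  exact ⟨a, b, h1, h2⟩

lemma eKfun_add {t : ℝ} (ht : 0 ≤ t) (x y : V) :
    eKfun i₀ i₁ t (x + y) ≤ eKfun i₀ i₁ t x + eKfun i₀ i₁ t y := by
  refine ENNReal.le_of_forall_pos_le_add fun ε hε hfin => ?_
  obtain ⟨hfx, hfy⟩ := ENNReal.add_lt_top.1 hfin
  have ε0 : (ε / 2 : ℝ≥0∞) ≠ 0 := by simpa [pos_iff_ne_zero] using hε.ne'
  have hM1 := ENNReal.lt_add_right hfx.ne ε0
  have hM2 := ENNReal.lt_add_right hfy.ne ε0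
  have h12 : eKfun i₀ i₁ t x + ε / 2 + (eKfun i₀ i₁ t y + ε / 2) ≤
      eKfun i₀ i₁ t x + eKfun i₀ i₁ t y + ε := by
    rw [add_add_add_comm, ENNReal.add_halves]
  generalize eKfun i₀ i₁ t x + ε / 2 = M1 at *
  generalize eKfun i₀ i₁ t y + ε / 2 = M2 at *
  refine le_trans ?_ h12
  obtain ⟨a, b, rfl, h1⟩ := eKfun_lt i₀ i₁ hM1
  obtain ⟨a', b', rfl, h2⟩ := eKfun_lt i₀ i₁ hM2
  refine (eKfun_le i₀ i₁ t _ (a + a') (b + b') (by simp only [map_add]; abel)).trans ?_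
  refine le_trans ?_ (ENNReal.add_lt_add h1 h2).le
  rw [← ENNReal.ofReal_add (by positivity) (by positivity)]
  apply ENNReal.ofReal_le_ofReal
  have := norm_add_le a a'
  have := mul_le_mul_of_nonneg_left (norm_add_le b b') ht
  linarith

lemma eKfun_sum {t : ℝ} (ht : 0 ≤ t) {ι : Type*} (s : Finset ι) (f : ι → V) :
    eKfun i₀ i₁ t (∑ i ∈ s, f i) ≤ ∑ i ∈ s, eKfun i₀ i₁ t (f i) :=
  Finset.le_sum_of_subadditive _ (eKfun_zero i₀ i₁ t).le (eKfun_add i₀ i₁ ht) s f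

lemma eKfun_mono {s t : ℝ} (h : s ≤ t) (x : V) : eKfun i₀ i₁ s x ≤ eKfun i₀ i₁ t x := by
  unfold eKfun
  gcongr

lemma eKfun_le_one {t : ℝ} (x : V) :
    eKfun i₀ i₁ t x ≤ ENNReal.ofReal (max 1 t) * eKfun i₀ i₁ 1 x := by
  have h0 : ENNReal.ofReal (max 1 t) ≠ 0 := by simp
  refine (ENNReal.div_le_iff_le_mul (Or.inl h0) (Or.inl ENNReal.ofReal_ne_top)).1 ?_ |>.trans_eq
    (mul_comm _ _)
  refine le_iInf fun a => le_iInf fun b => le_iInf fun h => ?_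
  rw [ENNReal.div_le_iff_le_mul (Or.inl h0) (Or.inl ENNReal.ofReal_ne_top),
    ← ENNReal.ofReal_mul (by positivity)]
  refine (eKfun_le i₀ i₁ t x a b h).trans (ENNReal.ofReal_le_ofReal ?_)
  have h1 : 1 ≤ max 1 t := le_max_left _ _
  have h2 : t ≤ max 1 t := le_max_right _ _
  nlinarith [norm_nonneg a, norm_nonneg b]

lemma eKfun_tsum {t : ℝ} (ht : 0 ≤ t) (x : V) (a : ℤ → E₀) (b : ℤ → E₁)
    (h : IsJRep i₀ i₁ x a b) :
    eKfun i₀ i₁ t x ≤ ∑' m, eKfun i₀ i₁ t (i₀ (a m)) := by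
  refine ENNReal.le_of_forall_pos_le_add fun ε hε _ => ?_
  have hm : 0 < max 1 t := lt_max_of_lt_left one_pos
  obtain ⟨F, hF⟩ := h.2 (ε / max 1 t) (by positivity)
  have h1 := hF F subset_rfl
  set y := ∑ n ∈ F, i₀ (a n)
  calc eKfun i₀ i₁ t x = eKfun i₀ i₁ t (y + (x - y)) := by rw [add_sub_cancel]
    _ ≤ eKfun i₀ i₁ t y + eKfun i₀ i₁ t (x - y) := eKfun_add i₀ i₁ ht _ _
    _ ≤ ∑' m, eKfun i₀ i₁ t (i₀ (a m)) + ε := by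
      refine add_le_add ((eKfun_sum i₀ i₁ ht _ _).trans (ENNReal.sum_le_tsum F)) ?_
      refine (eKfun_le_one i₀ i₁ _).trans ?_
      calc _ ≤ ENNReal.ofReal (max 1 t) * ENNReal.ofReal (ε / max 1 t) := by
            gcongr; exact h1.le
        _ = ε := by
            rw [← ENNReal.ofReal_mul hm.le, mul_div_cancel₀ _ hm.ne', ENNReal.ofReal_coe_nnreal]

lemma rho_ratio {ρ : ℝ → ℝ} (hρ : IsClassB ρ) (m n : ℤ) :
    ρ ((2:ℝ) ^ m) ≤ rbar ρ ((2:ℝ) ^ (m - n)) * ρ ((2:ℝ) ^ n) := by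
  have := rbar_le hρ (s := (2:ℝ) ^ (m - n)) (t := (2:ℝ) ^ n) (by positivity) (by positivity)
  rwa [← zpow_add₀ (by norm_num), sub_add_cancel] at this

lemma eK_term {ρ : ℝ → ℝ} (hρ : IsClassB ρ) (n m : ℤ) (a : E₀) (b : E₁) (hab : i₀ a = i₁ b) :
    eKfun i₀ i₁ ((2:ℝ) ^ n) (i₀ a) / ENNReal.ofReal (ρ ((2:ℝ) ^ n)) ≤
      ENNReal.ofReal (cker ρ (m - n)) *
        ENNReal.ofReal (max ‖a‖ ((2:ℝ) ^ m * ‖b‖) / ρ ((2:ℝ) ^ m)) := by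
  have hn : 0 < ρ ((2:ℝ) ^ n) := hρ.pos _ (by positivity)
  have hm : 0 < ρ ((2:ℝ) ^ m) := hρ.pos _ (by positivity)
  set J := max ‖a‖ ((2:ℝ) ^ m * ‖b‖) with hJ
  have hJ0 : 0 ≤ J := (norm_nonneg a).trans (le_max_left _ _)
  have h1 : eKfun i₀ i₁ ((2:ℝ) ^ n) (i₀ a) ≤
      ENNReal.ofReal (min 1 ((2:ℝ) ^ (-(m - n))) * J) := by
    rw [min_mul_of_nonneg _ _ hJ0, one_mul, ENNReal.ofReal_min]
    refine le_min ((eKfun_le₀ i₀ i₁ _ a).trans (ENNReal.ofReal_le_ofReal (le_max_left _ _))) ?_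
    rw [hab]
    refine (eKfun_le₁ i₀ i₁ _ b).trans (ENNReal.ofReal_le_ofReal ?_)
    calc (2:ℝ) ^ n * ‖b‖ = (2:ℝ) ^ (-(m - n)) * ((2:ℝ) ^ m * ‖b‖) := by
          rw [← mul_assoc, ← zpow_add₀ (by norm_num)]; congr 2; ring
      _ ≤ _ := by gcongr; exact le_max_right _ _
  rw [← ENNReal.ofReal_mul (cker_pos hρ _).le]
  refine (ENNReal.div_le_div_right h1 _).trans ?_
  rw [← ENNReal.ofReal_div_of_pos hn]
  apply ENNReal.ofReal_le_ofReal
  have hr := rho_ratio hρ m n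
  unfold cker
  rw [div_le_iff₀ hn]
  have h2 : 1 ≤ rbar ρ ((2:ℝ) ^ (m - n)) * ρ ((2:ℝ) ^ n) / ρ ((2:ℝ) ^ m) := by
    rwa [le_div_iff₀ hm, one_mul]
  have h3 : 0 ≤ min 1 ((2:ℝ) ^ (-(m - n))) * J :=
    mul_nonneg (le_min zero_le_one (by positivity)) hJ0
  calc _ ≤ min 1 ((2:ℝ) ^ (-(m - n))) * J *
        (rbar ρ ((2:ℝ) ^ (m - n)) * ρ ((2:ℝ) ^ n) / ρ ((2:ℝ) ^ m)) :=
        le_mul_of_one_le_right h3 h2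
    _ = _ := by ring

lemma K_le_J {ρ : ℝ → ℝ} (hρ : IsClassBpm ρ) (q : ℝ≥0∞) (hq : 0 < q) :
    ∃ C : ℝ≥0∞, C ≠ ∞ ∧ ∀ x : V, eKNorm i₀ i₁ ρ q x ≤ C * eJNorm i₀ i₁ ρ q x := by
  obtain ⟨C, hC, h⟩ := eLq_conv (fun k => ENNReal.ofReal (cker ρ k)) (cker_tsum hρ) q hq
  refine ⟨C + 1, by simp [hC], fun x => ?_⟩
  have h0 : C + 1 ≠ 0 := by simp
  have ht : C + 1 ≠ ∞ := by simp [hC]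
  rw [mul_comm, ← ENNReal.div_le_iff_le_mul (Or.inl h0) (Or.inl ht)]
  refine le_iInf fun a => le_iInf fun b => le_iInf fun hab => ?_
  rw [ENNReal.div_le_iff_le_mul (Or.inl h0) (Or.inl ht), mul_comm]
  refine le_trans ?_ ((h _).trans (mul_le_mul_left (le_self_add (a := C) (b := 1)) _))
  refine eLq_mono q fun n => ?_
  rw [ENNReal.div_eq_inv_mul]
  refine (mul_le_mul_right (eKfun_tsum i₀ i₁ (by positivity) x a b hab) _).trans ?_
  rw [← ENNReal.tsum_mul_left, ← (Equiv.addLeft n).tsum_eq]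
  refine ENNReal.tsum_le_tsum fun k => ?_
  have := eK_term i₀ i₁ hρ.toIsClassB n (n + k) (a (n + k)) (b (n + k)) (hab.1 _)
  rw [ENNReal.div_eq_inv_mul, add_sub_cancel_left] at this
  exact this

lemma eq_zero_of_eKfun [TopologicalSpace V] (hE : IsBanachCouple i₀ i₁) {t : ℝ} (ht : 0 < t)
    (x : V) (h : eKfun i₀ i₁ t x = 0) : x = 0 := by
  have := hE.t2
  have := hE.contAdd
  have h1 : ∀ k : ℕ, ∃ (a : E₀) (b : E₁), x = i₀ a + i₁ b ∧ ‖a‖ + t * ‖b‖ < 1 / ((k:ℝ) + 1) := by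
    intro k
    obtain ⟨a, b, h1, h2⟩ := eKfun_lt i₀ i₁ (t := t) (x := x)
      (M := ENNReal.ofReal (1 / ((k:ℝ) + 1))) (by rw [h]; simp; positivity)
    exact ⟨a, b, h1, (ENNReal.ofReal_lt_ofReal_iff (by positivity)).1 h2⟩
  choose a b hx hab using h1
  have hz := tendsto_one_div_add_atTop_nhds_zero_nat (𝕜 := ℝ)
  have ha : Tendsto a atTop (nhds 0) := by
    refine squeeze_zero_norm (fun k => ?_) hz
    have : 0 ≤ t * ‖b k‖ := by positivity
    linarith [hab k]
  have hb : Tendsto b atTop (nhds 0) := by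
    refine squeeze_zero_norm (a := fun k : ℕ => 1 / ((k:ℝ) + 1) / t) (fun k => ?_)
      (by simpa using hz.div_const t)
    rw [le_div_iff₀ ht]
    linarith [hab k, norm_nonneg (a k)]
  have h3 : Tendsto (fun k => i₀ (a k) + i₁ (b k)) atTop (nhds (i₀ 0 + i₁ 0)) :=
    ((hE.cont₀.tendsto 0).comp ha).add ((hE.cont₁.tendsto 0).comp hb)
  simp only [← hx, map_zero, add_zero] at h3
  exact tendsto_nhds_unique tendsto_const_nhds h3

lemma eJNorm_zero (ρ : ℝ → ℝ) (q : ℝ≥0∞) (hq : 0 < q) : eJNorm i₀ i₁ ρ q 0 = 0 := by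
  refine le_antisymm ?_ bot_le
  refine iInf_le_of_le 0 (iInf_le_of_le 0 (iInf_le_of_le ?_ ?_))
  · refine ⟨by simp, fun ε hε => ⟨∅, fun G _ => ?_⟩⟩
    simp [esumNorm, eKfun_zero, hε]
  · have := eLq_const_mul q hq 0 (fun _ => 0)
    simp at this
    simp [this]

lemma sum_tele (f : ℤ → V) (m : ℤ) (k : ℕ) :
    ∑ n ∈ Finset.Ioc m (m + k), (f n - f (n - 1)) = f (m + k) - f m := by
  induction k with
  | zero => simp
  | succ k ih =>
    have : Finset.Ioc m (m + (k + 1 : ℕ)) = insert (m + (k + 1 : ℕ)) (Finset.Ioc m (m + k)) := by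
      ext j; simp; omega
    rw [this, Finset.sum_insert (by simp), ih]
    have e : m + ((k + 1 : ℕ) : ℤ) - 1 = m + k := by push_cast; ring
    rw [e]; abel

lemma J_le_K [TopologicalSpace V] (hE : IsBanachCouple i₀ i₁) {ρ : ℝ → ℝ} (hρ : IsClassBpm ρ)
    (q : ℝ≥0∞) (hq : 0 < q) (x : V) :
    eJNorm i₀ i₁ ρ q x ≤ 6 * eKNorm i₀ i₁ ρ q x := by
  by_cases hx0 : x = 0
  · subst hx0; simp [eJNorm_zero i₀ i₁ ρ q hq]
  by_cases hM : eKNorm i₀ i₁ ρ q x = ∞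
  · rw [hM]; simp
  have hB := hρ.toIsClassB
  have hw : ∀ n : ℤ, 0 < ρ ((2:ℝ) ^ n) := fun n => hB.pos _ (by positivity)
  set D := (eKNorm i₀ i₁ ρ q x).toReal with hD
  have hD0 : 0 ≤ D := ENNReal.toReal_nonneg
  have hK : ∀ n : ℤ, eKfun i₀ i₁ ((2:ℝ) ^ n) x ≤ ENNReal.ofReal (D * ρ ((2:ℝ) ^ n)) := by
    intro n
    have h := le_eLq q hq
      (fun n : ℤ => eKfun i₀ i₁ ((2:ℝ) ^ n) x / ENNReal.ofReal (ρ ((2:ℝ) ^ n))) n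
    rw [ENNReal.div_le_iff_le_mul (Or.inl (by simpa using hw n))
      (Or.inl ENNReal.ofReal_ne_top)] at h
    rw [ENNReal.ofReal_mul hD0, hD, ENNReal.ofReal_toReal hM]
    exact h
  set κ : ℤ → ℝ := fun n => (eKfun i₀ i₁ ((2:ℝ) ^ n) x).toReal with hκ
  have hKt : ∀ n : ℤ, eKfun i₀ i₁ ((2:ℝ) ^ n) x ≠ ∞ := fun n =>
    ne_top_of_le_ne_top ENNReal.ofReal_ne_top (hK n)
  have hKκ : ∀ n : ℤ, eKfun i₀ i₁ ((2:ℝ) ^ n) x = ENNReal.ofReal (κ n) := fun n =>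
    (ENNReal.ofReal_toReal (hKt n)).symm
  have hκ0 : ∀ n, 0 < κ n := fun n => ENNReal.toReal_pos
    (fun h => hx0 (eq_zero_of_eKfun i₀ i₁ hE (by positivity) x h)) (hKt n)
  have hκD : ∀ n, κ n ≤ D * ρ ((2:ℝ) ^ n) := fun n =>
    ENNReal.toReal_le_of_le_ofReal (mul_nonneg hD0 (hw n).le) (hK n)
  have hκm : ∀ n, κ (n - 1) ≤ κ n := fun n => ENNReal.toReal_mono (hKt n)
    (eKfun_mono i₀ i₁ (zpow_le_zpow_right₀ (by norm_num) (by omega)) x)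
  have hdec : ∀ n : ℤ, ∃ (a : E₀) (b : E₁), x = i₀ a + i₁ b ∧
      ‖a‖ + (2:ℝ) ^ n * ‖b‖ < 2 * κ n := by
    intro n
    obtain ⟨a, b, h1, h2⟩ := eKfun_lt i₀ i₁ (t := (2:ℝ) ^ n) (x := x)
      (M := ENNReal.ofReal (2 * κ n)) (by
        rw [hKκ]
        exact (ENNReal.ofReal_lt_ofReal_iff (by linarith [hκ0 n])).2 (by linarith [hκ0 n]))
    exact ⟨a, b, h1, (ENNReal.ofReal_lt_ofReal_iff (by linarith [hκ0 n])).1 h2⟩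
  choose a b hx hab using hdec
  have ha : ∀ n, ‖a n‖ ≤ 2 * κ n := fun n => by
    have : 0 ≤ (2:ℝ) ^ n * ‖b n‖ := by positivity
    linarith [hab n]
  have hb : ∀ n, (2:ℝ) ^ n * ‖b n‖ ≤ 2 * κ n := fun n => by
    linarith [hab n, norm_nonneg (a n)]
  set A : ℤ → E₀ := fun n => a n - a (n - 1) with hA
  set B : ℤ → E₁ := fun n => b (n - 1) - b n with hBd
  have hAB : ∀ n, i₀ (A n) = i₁ (B n) := by
    intro n
    have := (hx n).symm.trans (hx (n - 1))
    simp only [hA, hBd, map_sub]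
    rw [sub_eq_sub_iff_add_eq_add, this]
    abel
  have hAn : ∀ n, ‖A n‖ ≤ 6 * κ n := fun n => by
    have := norm_sub_le (a n) (a (n - 1))
    simp only [hA]
    linarith [ha n, ha (n - 1), hκm n, hκ0 n]
  have hBn : ∀ n, (2:ℝ) ^ n * ‖B n‖ ≤ 6 * κ n := fun n => by
    have h1 := norm_sub_le (b (n - 1)) (b n)
    have h2 := hb (n - 1)
    have e : (2:ℝ) ^ n = 2 * (2:ℝ) ^ (n - 1) := by
      rw [zpow_sub_one₀ (by norm_num)]; ring
    have h3 := mul_le_mul_of_nonneg_left h1 (by positivity : 0 ≤ (2:ℝ) ^ n)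
    have h4 : (2:ℝ) ^ n * ‖b (n - 1)‖ ≤ 4 * κ (n - 1) := by rw [e]; linarith
    simp only [hBd]
    linarith [hb n, hκm n, hκ0 n]
  have hc : ∀ n, min 1 ((2:ℝ) ^ (-n)) * κ n ≤ D * cker ρ n := fun n => by
    have h1 := rho_ratio hB n 0
    simp only [sub_zero, zpow_zero, hB.one, mul_one] at h1
    have h2 : 0 ≤ min 1 ((2:ℝ) ^ (-n)) := le_min zero_le_one (by positivity)
    calc _ ≤ min 1 ((2:ℝ) ^ (-n)) * (D * rbar ρ ((2:ℝ) ^ n)) := by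
          gcongr
          exact (hκD n).trans (by gcongr)
      _ = _ := by unfold cker; ring
  have hsum : Summable (fun n => 6 * D * cker ρ n) := by
    have := cker_summable hρ 1 one_pos
    simp only [Real.rpow_one] at this
    exact this.mul_left _
  have hcp := cker_pos hB
  have hesA : ∀ n, esumNorm i₀ i₁ (i₀ (A n)) ≤ ENNReal.ofReal (6 * D * cker ρ n) := by
    intro n
    have h1 : esumNorm i₀ i₁ (i₀ (A n)) ≤
        ENNReal.ofReal (min 1 ((2:ℝ) ^ (-n)) * (6 * κ n)) := by
      rw [min_mul_of_nonneg _ _ (by linarith [hκ0 n]), one_mul, ENNReal.ofReal_min]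
      refine le_min ((eKfun_le₀ i₀ i₁ _ _).trans (ENNReal.ofReal_le_ofReal (hAn n))) ?_
      rw [hAB]
      refine (eKfun_le₁ i₀ i₁ _ _).trans (ENNReal.ofReal_le_ofReal ?_)
      rw [one_mul, zpow_neg, ← div_eq_inv_mul, le_div_iff₀ (by positivity), mul_comm]
      exact hBn n
    refine h1.trans (ENNReal.ofReal_le_ofReal ?_)
    linarith [hc n]
  have hes0 : ∀ n : ℤ, n ≤ 0 → esumNorm i₀ i₁ (i₀ (a n)) ≤ ENNReal.ofReal (6 * D * cker ρ n) := by
    intro n hn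
    refine (eKfun_le₀ i₀ i₁ _ _).trans (ENNReal.ofReal_le_ofReal ?_)
    have h1 := hc n
    rw [min_eq_left (one_le_zpow₀ (by norm_num) (by omega)), one_mul] at h1
    linarith [ha n, hκ0 n]
  have hes1 : ∀ n : ℤ, 0 ≤ n → esumNorm i₀ i₁ (i₁ (b n)) ≤ ENNReal.ofReal (6 * D * cker ρ n) := by
    intro n hn
    refine (eKfun_le₁ i₀ i₁ _ _).trans (ENNReal.ofReal_le_ofReal ?_)
    have h1 := hc n
    rw [min_eq_right (zpow_le_one_of_nonpos₀ (by norm_num) (by omega))] at h1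
    have h2 : ‖b n‖ ≤ (2:ℝ) ^ (-n) * (2 * κ n) := by
      rw [zpow_neg, ← div_eq_inv_mul, le_div_iff₀ (by positivity), mul_comm]
      exact hb n
    have h3 : 0 ≤ (2:ℝ) ^ (-n) * κ n := mul_nonneg (by positivity) (hκ0 n).le
    linarith
  have hrep : IsJRep i₀ i₁ x A B := by
    refine ⟨hAB, fun ε hε => ?_⟩
    obtain ⟨F0, hF0⟩ := summable_iff_vanishing_norm.1 hsum (ε / 3) (by linarith)
    obtain ⟨M, hM⟩ : ∃ M : ℕ, ∀ j ∈ F0, -(M:ℤ) < j ∧ j < M := by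
      refine ⟨∑ j ∈ F0, j.natAbs + 1, fun j hj => ?_⟩
      have := Finset.single_le_sum (f := fun j : ℤ => j.natAbs) (fun _ _ => Nat.zero_le _) hj
      omega
    have hend : ∀ j : ℤ, j ∉ F0 → 6 * D * cker ρ j < ε / 3 := by
      intro j hj
      have := hF0 {j} (by simpa using hj)
      rw [Finset.sum_singleton] at this
      exact (le_abs_self _).trans_lt this
    refine ⟨Finset.Ioc (-(M:ℤ) - 1) (-(M:ℤ) - 1 + (2 * M + 1 : ℕ)), fun G hG => ?_⟩
    set F := Finset.Ioc (-(M:ℤ) - 1) (-(M:ℤ) - 1 + (2 * M + 1 : ℕ)) with hF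
    have hS : ∑ n ∈ F, i₀ (A n) = i₀ (a M) - i₀ (a (-(M:ℤ) - 1)) := by
      simp only [hA, map_sub]
      rw [hF, sum_tele (fun n => i₀ (a n))]
      congr 3
      push_cast; ring
    have hdecomp : x - ∑ n ∈ G, i₀ (A n) =
        i₁ (b M) + i₀ (a (-(M:ℤ) - 1)) + ∑ n ∈ G \ F, i₀ (- A n) := by
      rw [← Finset.sum_sdiff hG, hS]
      simp only [map_neg, Finset.sum_neg_distrib]
      have := hx M
      conv_lhs => rw [this]
      abel
    have hneg : ∀ n, esumNorm i₀ i₁ (i₀ (- A n)) ≤ ENNReal.ofReal (6 * D * cker ρ n) := by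
      intro n
      have h1 : esumNorm i₀ i₁ (i₀ (- A n)) ≤
          ENNReal.ofReal (min 1 ((2:ℝ) ^ (-n)) * (6 * κ n)) := by
        rw [min_mul_of_nonneg _ _ (by linarith [hκ0 n]), one_mul, ENNReal.ofReal_min]
        refine le_min ((eKfun_le₀ i₀ i₁ _ _).trans
          (ENNReal.ofReal_le_ofReal (by rw [norm_neg]; exact hAn n))) ?_
        rw [map_neg, hAB, ← map_neg]
        refine (eKfun_le₁ i₀ i₁ _ _).trans (ENNReal.ofReal_le_ofReal ?_)
        rw [norm_neg, one_mul, zpow_neg, ← div_eq_inv_mul, le_div_iff₀ (by positivity), mul_comm]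
        exact hBn n
      refine h1.trans (ENNReal.ofReal_le_ofReal ?_)
      linarith [hc n]
    have hnn : ∀ n, 0 ≤ 6 * D * cker ρ n := fun n => by have := hcp n; positivity
    have htail : ∑ n ∈ G \ F, 6 * D * cker ρ n < ε / 3 := by
      refine (le_abs_self _).trans_lt (hF0 _ ?_)
      rw [Finset.disjoint_left]
      intro j hj hj0
      have := hM j hj0
      simp only [Finset.mem_sdiff, hF, Finset.mem_Ioc] at hj
      omega
    rw [hdecomp]
    calc _ ≤ esumNorm i₀ i₁ (i₁ (b M)) + esumNorm i₀ i₁ (i₀ (a (-(M:ℤ) - 1))) +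
          ∑ n ∈ G \ F, esumNorm i₀ i₁ (i₀ (- A n)) := by
          refine (eKfun_add i₀ i₁ zero_le_one _ _).trans (add_le_add
            (eKfun_add i₀ i₁ zero_le_one _ _) (eKfun_sum i₀ i₁ zero_le_one _ _))
      _ ≤ ENNReal.ofReal (6 * D * cker ρ M) + ENNReal.ofReal (6 * D * cker ρ (-(M:ℤ) - 1)) +
          ∑ n ∈ G \ F, ENNReal.ofReal (6 * D * cker ρ n) := by
          gcongr
          · exact hes1 _ (by omega)
          · exact hes0 _ (by omega)
          · exact hneg _
      _ = ENNReal.ofReal (6 * D * cker ρ M + 6 * D * cker ρ (-(M:ℤ) - 1) +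
          ∑ n ∈ G \ F, 6 * D * cker ρ n) := by
          rw [ENNReal.ofReal_add (add_nonneg (hnn _) (hnn _))
            (Finset.sum_nonneg fun n _ => hnn n), ENNReal.ofReal_add (hnn _) (hnn _),
            ENNReal.ofReal_sum_of_nonneg fun n _ => hnn n]
      _ < ENNReal.ofReal ε := by
          rw [ENNReal.ofReal_lt_ofReal_iff hε]
          have h1 := hend M (fun h => by have := hM _ h; omega)
          have h2 := hend (-(M:ℤ) - 1) (fun h => by have := hM _ h; omega)
          linarith
  refine iInf_le_of_le A (iInf_le_of_le B (iInf_le_of_le hrep ?_))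
  unfold eKNorm
  rw [← eLq_const_mul q hq]
  refine eLq_mono q fun n => ?_
  rw [hKκ, ← ENNReal.ofReal_div_of_pos (hw n)]
  have e6 : (6 : ℝ≥0∞) = ENNReal.ofReal 6 := by simp
  rw [e6, ← ENNReal.ofReal_mul (by norm_num)]
  apply ENNReal.ofReal_le_ofReal
  rw [← mul_div_assoc]
  have := (hw n).le
  gcongr
  exact max_le (hAn n) (hBn n)

end K

/-- Equivalence Theorem: for a Banach couple `(E₀,E₁)`, `ρ ∈ ℬ^{+-}` and
`0 < q ≤ ∞`, `(E₀,E₁)_{ρ,q;J} = (E₀,E₁)_{ρ,q;K}` with equivalent (extended) norms. -/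
theorem statement16 {E₀ E₁ V : Type*}
    [NormedAddCommGroup E₀] [NormedSpace ℝ E₀] [NormedAddCommGroup E₁] [NormedSpace ℝ E₁]
    [AddCommGroup V] [Module ℝ V] [TopologicalSpace V]
    (i₀ : E₀ →ₗ[ℝ] V) (i₁ : E₁ →ₗ[ℝ] V) (hE : IsBanachCouple i₀ i₁)
    (ρ : ℝ → ℝ) (hρ : IsClassBpm ρ) (q : ℝ≥0∞) (hq : 0 < q) :
    ∃ C > 0, ∀ x : V,
      eKNorm i₀ i₁ ρ q x ≤ ENNReal.ofReal C * eJNorm i₀ i₁ ρ q x ∧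
      eJNorm i₀ i₁ ρ q x ≤ ENNReal.ofReal C * eKNorm i₀ i₁ ρ q x := by
  obtain ⟨C, hC, h⟩ := K_le_J i₀ i₁ hρ q hq
  refine ⟨C.toReal + 6, by positivity, fun x => ⟨(h x).trans ?_, ?_⟩⟩
  · gcongr
    exact (ENNReal.le_ofReal_iff_toReal_le hC (by positivity)).2 (by linarith)
  · refine (J_le_K i₀ i₁ hE hρ q hq x).trans ?_
    gcongr
    rw [← ENNReal.ofReal_ofNat]
    exact ENNReal.ofReal_le_ofReal (by linarith [ENNReal.toReal_nonneg (a := C)])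
end

section
/- Let (E₀,E₁) be a Banach couple and consider the spaces ℓ¹₀(Δ_m) and ℓ¹₁(Δ_m). For n∈ℕ define the cutting operators on sequences u = (u_m)_{m∈ℤ}: P_n u keeps the coordinates with |m| ≤ n and sets the others to 0, P_n⁺ u keeps the coordinates with m ≥ n+1, and P_n⁻ u keeps the coordinates with m ≤ −n−1. Then I = P_n + P_n⁺ + P_n⁻; each of P_n, P_n⁺, P_n⁻ has operator norm at most 1 on ℓ¹_k(Δ_m) for k=0,1; P_n maps ℓ¹₀(Δ_m)+ℓ¹₁(Δ_m) into ℓ¹₀(Δ_m)∩ℓ¹₁(Δ_m); and ‖P_n⁺‖_{L(ℓ¹₀,ℓ¹₁)} ≤ 2^{−n} and ‖P_n⁻‖_{L(ℓ¹₁,ℓ¹₀)} ≤ 2^{−n}. Consequently the Banach couple (ℓ¹₀(Δ_m), ℓ¹₁(Δ_m)) satisfies the Approximation Hypothesis (AP). -/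
open Filter Set MeasureTheory ENNReal NNReal

noncomputable section

variable {E₀ E₁ V : Type*} [NormedAddCommGroup E₀] [NormedSpace ℝ E₀]
  [NormedAddCommGroup E₁] [NormedSpace ℝ E₁]
  [AddCommGroup V] [Module ℝ V] [TopologicalSpace V]

/-- The extended norm of `ℓ¹_k(Δ_m)` (for `k = 0, 1`): sequences `u_m ∈ E₀ ∩ E₁`
(coded as compatible pairs) with `∑_m 2^{-km} J(2^{-m}, u_m) < ∞`; the value is `∞`
on non-compatible pairs. -/
def ellOneNorm (i₀ : E₀ →ₗ[ℝ] V) (i₁ : E₁ →ₗ[ℝ] V) (k : ℕ)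
    (u : (ℤ → E₀) × (ℤ → E₁)) : ℝ≥0∞ :=
  (∑' m : ℤ, ENNReal.ofReal
      ((2 : ℝ) ^ (-(k : ℤ) * m) * max ‖u.1 m‖ ((2 : ℝ) ^ (-m) * ‖u.2 m‖))) +
  ⨅ (_ : ∀ m, i₀ (u.1 m) = i₁ (u.2 m)), 0

/-- The cutting operator keeping the coordinates `m` with `φ m`. -/
def cutOp (φ : ℤ → Prop) [DecidablePred φ] :
    ((ℤ → E₀) × (ℤ → E₁)) →ₗ[ℝ] ((ℤ → E₀) × (ℤ → E₁)) where
  toFun u := (fun m => if φ m then u.1 m else 0, fun m => if φ m then u.2 m else 0)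
  map_add' u v := by
    refine Prod.ext ?_ ?_ <;> funext m <;> by_cases h : φ m <;> simp [h]
  map_smul' c u := by
    refine Prod.ext ?_ ?_ <;> funext m <;> by_cases h : φ m <;> simp [h]

theorem cutOp_bound (i₀ : E₀ →ₗ[ℝ] V) (i₁ : E₁ →ₗ[ℝ] V) (φ : ℤ → Prop) [DecidablePred φ]
    (k l : ℕ) (c : ℝ) (hc : 0 < c)
    (h : ∀ m, φ m → (2 : ℝ) ^ (-(k : ℤ) * m) ≤ c * (2 : ℝ) ^ (-(l : ℤ) * m))
    (u : (ℤ → E₀) × (ℤ → E₁)) :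
    ellOneNorm i₀ i₁ k (cutOp φ u) ≤ ENNReal.ofReal c * ellOneNorm i₀ i₁ l u := by
  by_cases hu : ∀ m, i₀ (u.1 m) = i₁ (u.2 m)
  · have hu' : ∀ m, i₀ ((cutOp φ u).1 m) = i₁ ((cutOp φ u).2 m) := by
      intro m
      by_cases hm : φ m <;> simp [cutOp, hm, hu m]
    unfold ellOneNorm
    rw [iInf_pos hu, iInf_pos hu', add_zero, add_zero, ← ENNReal.tsum_mul_left]
    refine ENNReal.tsum_le_tsum fun m => ?_
    rw [← ENNReal.ofReal_mul hc.le]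
    apply ENNReal.ofReal_le_ofReal
    have h0 : (0 : ℝ) ≤ max ‖u.1 m‖ ((2 : ℝ) ^ (-m) * ‖u.2 m‖) :=
      le_max_of_le_left (norm_nonneg _)
    by_cases hm : φ m
    · simp only [cutOp, LinearMap.coe_mk, AddHom.coe_mk, if_pos hm]
      rw [← mul_assoc]
      exact mul_le_mul_of_nonneg_right (h m hm) h0
    · simp only [cutOp, LinearMap.coe_mk, AddHom.coe_mk, if_neg hm, norm_zero, mul_zero, max_self]
      positivity
  · have : ellOneNorm i₀ i₁ l u = ∞ := by
      unfold ellOneNorm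
      rw [iInf_neg hu, add_top]
    rw [this, ENNReal.mul_top (by simpa using hc)]
    exact le_top

theorem compat_of_ne_top (i₀ : E₀ →ₗ[ℝ] V) (i₁ : E₁ →ₗ[ℝ] V) (k : ℕ)
    (u : (ℤ → E₀) × (ℤ → E₁)) (h : ellOneNorm i₀ i₁ k u ≠ ∞) :
    ∀ m, i₀ (u.1 m) = i₁ (u.2 m) := by
  by_contra hu
  apply h
  unfold ellOneNorm
  rw [iInf_neg hu, add_top]

theorem cutOp_ne_top (i₀ : E₀ →ₗ[ℝ] V) (i₁ : E₁ →ₗ[ℝ] V) (k n : ℕ)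
    (u : (ℤ → E₀) × (ℤ → E₁)) (hu : ∀ m, i₀ (u.1 m) = i₁ (u.2 m)) :
    ellOneNorm i₀ i₁ k (cutOp (fun m => |m| ≤ (n : ℤ)) u) ≠ ∞ := by
  have hu' : ∀ m, i₀ ((cutOp (fun m => |m| ≤ (n : ℤ)) u).1 m)
      = i₁ ((cutOp (fun m => |m| ≤ (n : ℤ)) u).2 m) := by
    intro m
    by_cases hm : |m| ≤ (n : ℤ) <;> simp [cutOp, hm, hu m]
  unfold ellOneNorm
  rw [iInf_pos hu', add_zero, tsum_eq_sum (s := Finset.Icc (-(n : ℤ)) n)]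
  · exact (ENNReal.sum_lt_top.2 fun _ _ => ENNReal.ofReal_lt_top).ne
  · intro m hm
    have : ¬ |m| ≤ (n : ℤ) := by
      rw [abs_le]; simpa using hm
    simp [cutOp, this]

theorem cutOp_sum (n : ℕ) (u : (ℤ → E₀) × (ℤ → E₁)) :
    cutOp (fun m => |m| ≤ (n : ℤ)) u + cutOp (fun m => (n : ℤ) < m) u +
      cutOp (fun m => m < -(n : ℤ)) u = u := by
  have key : ∀ m : ℤ, (|m| ≤ (n : ℤ) ∧ ¬ (n : ℤ) < m ∧ ¬ m < -(n : ℤ)) ∨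
      (¬ |m| ≤ (n : ℤ) ∧ (n : ℤ) < m ∧ ¬ m < -(n : ℤ)) ∨
      (¬ |m| ≤ (n : ℤ) ∧ ¬ (n : ℤ) < m ∧ m < -(n : ℤ)) := by
    intro m
    rw [abs_le]
    omega
  refine Prod.ext ?_ ?_ <;> funext m <;>
    rcases key m with ⟨h1, h2, h3⟩ | ⟨h1, h2, h3⟩ | ⟨h1, h2, h3⟩ <;>
    simp only [cutOp, LinearMap.coe_mk, AddHom.coe_mk, Prod.fst_add, Prod.snd_add, Pi.add_apply,
      h1, h2, h3, if_true, if_false, add_zero, zero_add]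

/-- the cutting operators `P_n` (coordinates `|m| ≤ n`),
`P_n⁺` (coordinates `m ≥ n+1`), `P_n⁻` (coordinates `m ≤ -n-1`) satisfy
`I = P_n + P_n⁺ + P_n⁻`, all have norm at most `1` on `ℓ¹_k(Δ_m)`, `P_n` maps
`ℓ¹₀ + ℓ¹₁` into `ℓ¹₀ ∩ ℓ¹₁`, `‖P_n⁺‖_{L(ℓ¹₀,ℓ¹₁)} ≤ 2^{-n}`,
`‖P_n⁻‖_{L(ℓ¹₁,ℓ¹₀)} ≤ 2^{-n}`; consequently `(ℓ¹₀(Δ_m), ℓ¹₁(Δ_m))` satisfies the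
approximation hypothesis (AP). -/
theorem statement18 (i₀ : E₀ →ₗ[ℝ] V) (i₁ : E₁ →ₗ[ℝ] V) (hE : IsBanachCouple i₀ i₁) :
    (∀ (n : ℕ) (u : (ℤ → E₀) × (ℤ → E₁)),
      cutOp (fun m => |m| ≤ (n : ℤ)) u + cutOp (fun m => (n : ℤ) < m) u +
        cutOp (fun m => m < -(n : ℤ)) u = u) ∧
    (∀ (n : ℕ) (k : ℕ) (u : (ℤ → E₀) × (ℤ → E₁)), k ≤ 1 →
      ellOneNorm i₀ i₁ k (cutOp (fun m => |m| ≤ (n : ℤ)) u) ≤ ellOneNorm i₀ i₁ k u ∧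
      ellOneNorm i₀ i₁ k (cutOp (fun m => (n : ℤ) < m) u) ≤ ellOneNorm i₀ i₁ k u ∧
      ellOneNorm i₀ i₁ k (cutOp (fun m => m < -(n : ℤ)) u) ≤ ellOneNorm i₀ i₁ k u) ∧
    (∀ (n : ℕ) (u : (ℤ → E₀) × (ℤ → E₁)),
      ellOneNorm i₀ i₁ 0 u ≠ ∞ ∨ ellOneNorm i₀ i₁ 1 u ≠ ∞ →
      ellOneNorm i₀ i₁ 0 (cutOp (fun m => |m| ≤ (n : ℤ)) u) ≠ ∞ ∧
      ellOneNorm i₀ i₁ 1 (cutOp (fun m => |m| ≤ (n : ℤ)) u) ≠ ∞) ∧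
    (∀ (n : ℕ) (u : (ℤ → E₀) × (ℤ → E₁)),
      ellOneNorm i₀ i₁ 1 (cutOp (fun m => (n : ℤ) < m) u) ≤
        ENNReal.ofReal ((2 : ℝ) ^ (-(n : ℤ))) * ellOneNorm i₀ i₁ 0 u) ∧
    (∀ (n : ℕ) (u : (ℤ → E₀) × (ℤ → E₁)),
      ellOneNorm i₀ i₁ 0 (cutOp (fun m => m < -(n : ℤ)) u) ≤
        ENNReal.ofReal ((2 : ℝ) ^ (-(n : ℤ))) * ellOneNorm i₀ i₁ 1 u) ∧
    SatisfiesAP (ellOneNorm i₀ i₁ 0) (ellOneNorm i₀ i₁ 1) := by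
  have h1 : ∀ (k : ℕ) (φ : ℤ → Prop) [DecidablePred φ] (u : (ℤ → E₀) × (ℤ → E₁)),
      ellOneNorm i₀ i₁ k (cutOp φ u) ≤ ellOneNorm i₀ i₁ k u := by
    intro k φ _ u
    simpa using cutOp_bound i₀ i₁ φ k k 1 one_pos (fun m _ => by simp) u
  have hp : ∀ (n : ℕ) (u : (ℤ → E₀) × (ℤ → E₁)),
      ellOneNorm i₀ i₁ 1 (cutOp (fun m => (n : ℤ) < m) u) ≤
        ENNReal.ofReal ((2 : ℝ) ^ (-(n : ℤ))) * ellOneNorm i₀ i₁ 0 u := by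
    intro n u
    refine cutOp_bound i₀ i₁ _ 1 0 _ (by positivity) (fun m hm => ?_) u
    rw [← zpow_add₀ (by norm_num)]
    apply zpow_le_zpow_right₀ (by norm_num)
    push_cast
    linarith
  have hm : ∀ (n : ℕ) (u : (ℤ → E₀) × (ℤ → E₁)),
      ellOneNorm i₀ i₁ 0 (cutOp (fun m => m < -(n : ℤ)) u) ≤
        ENNReal.ofReal ((2 : ℝ) ^ (-(n : ℤ))) * ellOneNorm i₀ i₁ 1 u := by
    intro n u
    refine cutOp_bound i₀ i₁ _ 0 1 _ (by positivity) (fun m hm => ?_) u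
    rw [← zpow_add₀ (by norm_num)]
    apply zpow_le_zpow_right₀ (by norm_num)
    push_cast
    linarith
  refine ⟨cutOp_sum, fun n k u _ => ⟨h1 _ _ _, h1 _ _ _, h1 _ _ _⟩, ?_, hp, hm, ?_⟩
  · intro n u hu
    have hu' : ∀ m, i₀ (u.1 m) = i₁ (u.2 m) := by
      rcases hu with hu | hu <;> exact compat_of_ne_top i₀ i₁ _ u hu
    exact ⟨cutOp_ne_top i₀ i₁ _ n u hu', cutOp_ne_top i₀ i₁ _ n u hu'⟩
  · refine ⟨fun n => cutOp (fun m => |m| ≤ (n : ℤ)), fun n => cutOp (fun m => (n : ℤ) < m),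
      fun n => cutOp (fun m => m < -(n : ℤ)), 1, fun n => ENNReal.ofReal ((2 : ℝ) ^ (-(n : ℤ))),
      one_pos, ENNReal.one_ne_top, ?_, ?_, ?_, ?_, ?_, ?_, ?_, ?_, fun n x _ => hp n x,
      fun n x _ => hm n x⟩
    · have : Filter.Tendsto (fun n : ℕ => (2 : ℝ) ^ (-(n : ℤ))) Filter.atTop (nhds 0) := by
        have h := tendsto_pow_atTop_nhds_zero_of_lt_one (r := (1 / 2 : ℝ)) (by norm_num)
          (by norm_num)
        refine h.congr fun n => ?_
        simp
      simpa using ENNReal.tendsto_ofReal this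
    · intro n x y hx hy
      have hc : ∀ m, i₀ ((x + y).1 m) = i₁ ((x + y).2 m) := by
        intro m
        simp [compat_of_ne_top i₀ i₁ _ x hx m, compat_of_ne_top i₀ i₁ _ y hy m]
      exact ⟨cutOp_sum n _, cutOp_ne_top i₀ i₁ _ n _ hc, cutOp_ne_top i₀ i₁ _ n _ hc⟩
    all_goals
      intro n x
      rw [one_mul]
      exact h1 _ _ _

end
end
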